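/- arXiv:2508.09794 — 2 statements merged into one kernel-verified Lean document; each statement's English description precedes it below -/
import Mathlib

section
/- Let (R, ν) be a normalized BV₀ pair on (−1,1) of class BV₊ on (−1,1). Then: (a) for every f ∈ D_{R,ν}, the transform T_{R,ν}f extends to a continuous function on [−1,1]; and (b) for every continuous function g : [−1,1] → ℝ there exists exactly one f ∈ D_{R,ν} such that T_{R,ν}f(t) = g(t) for all t ∈ (−1,1). -/
open MeasureTheory Set Filter Function Topology

/-- A normalized BV₀ pair on `(-1,1)`: a signed Borel measure, represented by its
mutually singular positive part `νp` and negative part `νm`, that is finite on compact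
subsets of `(-1,1)`, gives no mass to `{0}` and lives on `(-1,1)`, together with a
function `R` satisfying the fundamental-theorem-of-calculus relations. -/
structure NormBV0 where
  R : ℝ → ℝ
  νp : Measure ℝ
  νm : Measure ℝ
  sing : νp.MutuallySingular νm
  supp_p : νp (Set.Ioo (-1 : ℝ) 1)ᶜ = 0
  supp_m : νm (Set.Ioo (-1 : ℝ) 1)ᶜ = 0
  locfin_p : ∀ K : Set ℝ, IsCompact K → K ⊆ Set.Ioo (-1 : ℝ) 1 → νp K ≠ ⊤
  locfin_m : ∀ K : Set ℝ, IsCompact K → K ⊆ Set.Ioo (-1 : ℝ) 1 → νm K ≠ ⊤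
  zero_p : νp {0} = 0
  zero_m : νm {0} = 0
  fund_pos : ∀ t ∈ Set.Ico (0 : ℝ) 1,
    R t = R 0 - ((∫ s in Set.Ioc (0 : ℝ) t, s ∂νp) - (∫ s in Set.Ioc (0 : ℝ) t, s ∂νm))
  fund_neg : ∀ t ∈ Set.Ioc (-1 : ℝ) 0,
    R t = R 0 + ((∫ s in Set.Ico t (0 : ℝ), s ∂νp) - (∫ s in Set.Ico t (0 : ℝ), s ∂νm))

/-- The integral of `f` over `S` with respect to the signed measure `νp - νm`. -/
noncomputable def NormBV0.integ (P : NormBV0) (S : Set ℝ) (f : ℝ → ℝ) : ℝ :=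
  (∫ s in S, f s ∂P.νp) - (∫ s in S, f s ∂P.νm)

/-- The transform `T_{R,ν} f`. -/
noncomputable def NormBV0.T (P : NormBV0) (f : ℝ → ℝ) (t : ℝ) : ℝ :=
  if 0 < t then P.R t * f t + t * P.integ (Set.Ioc 0 t) f
  else P.R t * f t - t * P.integ (Set.Ico t 0) f

/-- The pair `(R,ν)` is of class `BV₊` on `(-1,1)`: `|ν|((-1,1)) < ∞`, `R > 0` on
`(-1,1)`, and `ν` or `-ν` is nonnegative. -/
def NormBV0.BVplus (P : NormBV0) : Prop :=
  P.νp (Set.Ioo (-1 : ℝ) 1) ≠ ⊤ ∧ P.νm (Set.Ioo (-1 : ℝ) 1) ≠ ⊤ ∧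
  (∀ t ∈ Set.Ioo (-1 : ℝ) 1, 0 < P.R t) ∧ (P.νm = 0 ∨ P.νp = 0)

/-- The class `D_{R,ν}` of continuous functions on `(-1,1)` whose four boundary limits
exist. -/
def NormBV0.memD (P : NormBV0) (f : ℝ → ℝ) : Prop :=
  ContinuousOn f (Set.Ioo (-1 : ℝ) 1) ∧
  (∃ L : ℝ, Tendsto (fun t => P.R t * f t) (𝓝[<] (1 : ℝ)) (𝓝 L)) ∧
  (∃ L : ℝ, Tendsto (fun t => P.R t * f t) (𝓝[>] (-1 : ℝ)) (𝓝 L)) ∧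
  (∃ L : ℝ, Tendsto (fun t => P.integ (Set.Ioc 0 t) f) (𝓝[<] (1 : ℝ)) (𝓝 L)) ∧
  (∃ L : ℝ, Tendsto (fun t => P.integ (Set.Ico t 0) f) (𝓝[>] (-1 : ℝ)) (𝓝 L))

/-- `f` is bounded on every `[0, b]` with `b < 1`. -/
def LocBdd (f : ℝ → ℝ) : Prop := ∀ b < (1 : ℝ), ∃ C, ∀ s ∈ Icc (0 : ℝ) b, |f s| ≤ C

theorem LocBdd.mul {f g : ℝ → ℝ} (hf : LocBdd f) (hg : LocBdd g) :
    LocBdd fun s => f s * g s := by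
  intro b hb
  obtain ⟨C, hC⟩ := hf b hb
  obtain ⟨D, hD⟩ := hg b hb
  refine ⟨C * D, fun s hs => ?_⟩
  rw [abs_mul]
  exact mul_le_mul (hC s hs) (hD s hs) (abs_nonneg _) ((abs_nonneg _).trans (hC s hs))

theorem LocBdd.sub {f g : ℝ → ℝ} (hf : LocBdd f) (hg : LocBdd g) :
    LocBdd fun s => f s - g s := by
  intro b hb
  obtain ⟨C, hC⟩ := hf b hb
  obtain ⟨D, hD⟩ := hg b hb
  exact ⟨C + D, fun s hs => (abs_sub _ _).trans (add_le_add (hC s hs) (hD s hs))⟩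

theorem LocBdd.const (c : ℝ) : LocBdd fun _ => c := fun _ _ => ⟨|c|, fun _ _ => le_rfl⟩

theorem LocBdd.id : LocBdd fun s => s := fun _ hb =>
  ⟨1, fun s hs => by rw [abs_of_nonneg hs.1]; linarith [hs.2]⟩

theorem ContinuousOn.locBdd {f : ℝ → ℝ} (hf : ContinuousOn f (Ico 0 1)) : LocBdd f :=
  fun _ hb => isCompact_Icc.exists_bound_of_continuousOn
    (hf.mono fun _ hs => ⟨hs.1, hs.2.trans_lt hb⟩)

theorem ContinuousOn.aestronglyMeasurable_of_ae_mem {ν : Measure ℝ} {f : ℝ → ℝ}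
    (hf : ContinuousOn f (Ico 0 1))
    (hν : ∀ᵐ s ∂ν, s ∈ Ioo (0 : ℝ) 1) : AEStronglyMeasurable f ν := by
  have h := (hf.mono Ioo_subset_Ico_self).aestronglyMeasurable (μ := ν) measurableSet_Ioo
  rwa [Measure.restrict_eq_self_of_ae_mem hν] at h

theorem setIntegral_Iic_eq_Iio_add {ν : Measure ℝ} {f : ℝ → ℝ} {t : ℝ}
    (hf : IntegrableOn f (Iic t) ν) :
    ∫ s in Iic t, f s ∂ν = ∫ s in Iio t, f s ∂ν + f t * ν.real {t} := by
  have h : Iic t = Iio t ∪ {t} := by simp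
  rw [h] at hf ⊢
  rw [setIntegral_union (by simp) (measurableSet_singleton t) hf.left_of_union hf.right_of_union,
    integral_singleton, smul_eq_mul, mul_comm]

theorem measurable_setIntegral_Iic {ν : Measure ℝ} [SFinite ν] {f : ℝ → ℝ}
    (hf : AEStronglyMeasurable f ν) :
    Measurable fun t => ∫ s in Iic t, f s ∂ν := by
  have h : StronglyMeasurable fun p : ℝ × ℝ =>
      {p : ℝ × ℝ | p.2 ≤ p.1}.indicator (fun p => hf.mk f p.2) p :=
    (hf.stronglyMeasurable_mk.comp_measurable measurable_snd).indicator
      (measurableSet_le measurable_snd measurable_fst)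
  have heq : (fun t => ∫ s in Iic t, f s ∂ν) = fun t => ∫ s,
      {p : ℝ × ℝ | p.2 ≤ p.1}.indicator (fun p => hf.mk f p.2) (t, s) ∂ν := by
    funext t
    rw [setIntegral_congr_ae measurableSet_Iic (hf.ae_eq_mk.mono fun s hs _ => hs),
      ← integral_indicator measurableSet_Iic]
    rfl
  rw [heq]
  exact h.integral_prod_right'.measurable

theorem measurable_setIntegral_Iio {ν : Measure ℝ} [SFinite ν] {f : ℝ → ℝ}
    (hf : AEStronglyMeasurable f ν) :
    Measurable fun t => ∫ s in Iio t, f s ∂ν := by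
  have h : StronglyMeasurable fun p : ℝ × ℝ =>
      {p : ℝ × ℝ | p.2 < p.1}.indicator (fun p => hf.mk f p.2) p :=
    (hf.stronglyMeasurable_mk.comp_measurable measurable_snd).indicator
      (measurableSet_lt measurable_snd measurable_fst)
  have heq : (fun t => ∫ s in Iio t, f s ∂ν) = fun t => ∫ s,
      {p : ℝ × ℝ | p.2 < p.1}.indicator (fun p => hf.mk f p.2) (t, s) ∂ν := by
    funext t
    rw [setIntegral_congr_ae measurableSet_Iio (hf.ae_eq_mk.mono fun s hs _ => hs),
      ← integral_indicator measurableSet_Iio]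
    rfl
  rw [heq]
  exact h.integral_prod_right'.measurable

theorem tendsto_setIntegral_Iic_left {ν : Measure ℝ} {f : ℝ → ℝ}
    (hν : ∀ᵐ s ∂ν, s ∈ Ioo (0 : ℝ) 1) (hf : Integrable f ν) :
    Tendsto (fun t => ∫ s in Iic t, f s ∂ν) (𝓝[<] 1) (𝓝 (∫ s, f s ∂ν)) := by
  simp_rw [← integral_indicator measurableSet_Iic]
  refine tendsto_integral_filter_of_dominated_convergence (fun s => |f s|)
    (Eventually.of_forall fun t => hf.aestronglyMeasurable.indicator measurableSet_Iic)
    (Eventually.of_forall fun t => Eventually.of_forall fun s =>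
      norm_indicator_le_norm_self _ _) hf.abs ?_
  filter_upwards [hν] with s hs
  refine tendsto_const_nhds.congr' ?_
  filter_upwards [mem_nhdsWithin_of_mem_nhds (Ioi_mem_nhds hs.2)] with t ht
  rw [indicator_of_mem (mem_Iic.2 (le_of_lt (mem_Ioi.1 ht)))]

section FiniteMeasure

variable {ν : Measure ℝ} [IsFiniteMeasure ν]

theorem LocBdd.integrableOn {f : ℝ → ℝ} (hf : LocBdd f) (hν : ∀ᵐ s ∂ν, s ∈ Ioo (0 : ℝ) 1)
    (hm : AEStronglyMeasurable f ν) {t : ℝ} (ht : t < 1) : IntegrableOn f (Iic t) ν := by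
  obtain ⟨C, hC⟩ := hf t ht
  refine Measure.integrableOn_of_bounded (M := C) (measure_ne_top _ _) hm ?_
  filter_upwards [ae_restrict_of_ae hν, ae_restrict_mem measurableSet_Iic] with s hs hst
  exact hC s ⟨hs.1.le, hst⟩

theorem LocBdd.setIntegral_Iic {f : ℝ → ℝ} (hf : LocBdd f)
    (hν : ∀ᵐ s ∂ν, s ∈ Ioo (0 : ℝ) 1) : LocBdd fun t => ∫ s in Iic t, f s ∂ν := by
  intro b hb
  obtain ⟨C, hC⟩ := hf b hb
  refine ⟨C * ν.real univ, fun t ht => ?_⟩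
  have hC0 : 0 ≤ C := (abs_nonneg _).trans (hC t ht)
  refine (norm_setIntegral_le_of_norm_le_const_ae' (f := f) (C := C) (measure_lt_top ν (Iic t)) ?_).trans ?_
  · filter_upwards [hν] with s hs hst
    exact hC s ⟨hs.1.le, le_trans hst ht.2⟩
  · exact mul_le_mul_of_nonneg_left (measureReal_mono (subset_univ _)) hC0

/-- A function dominated by a multiple of its own integral over the strict past vanishes. -/
theorem eq_zero_of_abs_le_setIntegral_Iio {u : ℝ → ℝ} (hν : ∀ᵐ s ∂ν, s ∈ Ioo (0 : ℝ) 1)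
    (hu : LocBdd u)
    (h : ∀ b < (1 : ℝ), ∃ C, 0 ≤ C ∧ ∀ t ∈ Icc 0 b, |u t| ≤ C * ∫ s in Iio t, |u s| ∂ν) :
    ∀ t ∈ Ico (0 : ℝ) 1, u t = 0 := by
  intro b hb
  by_contra hub
  obtain ⟨C, hC0, hC⟩ := h b hb.2
  obtain ⟨M₀, hM₀⟩ := hu b hb.2
  set Z : Set ℝ := {t | t ∈ Icc 0 b ∧ u t ≠ 0} with hZ
  have hZb : BddBelow Z := ⟨0, fun t ht => ht.1.1⟩
  have hZn : Z.Nonempty := ⟨b, ⟨hb.1, le_rfl⟩, hub⟩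
  set τ := sInf Z with hτ
  have hτ0 : 0 ≤ τ := le_csInf hZn fun t ht => ht.1.1
  have hτb : τ ≤ b := csInf_le hZb ⟨⟨hb.1, le_rfl⟩, hub⟩
  have hlt : ∀ r, 0 ≤ r → r < τ → u r = 0 := fun r h0 hr => by
    by_contra hne
    exact absurd (csInf_le hZb (⟨⟨h0, hr.le.trans hτb⟩, hne⟩ : r ∈ Z)) (not_le.2 hr)
  have hτu : u τ = 0 := by
    have h1 : ∫ s in Iio τ, |u s| ∂ν = 0 := by
      refine integral_eq_zero_of_ae ?_
      filter_upwards [ae_restrict_of_ae hν, ae_restrict_mem measurableSet_Iio] with s hs hst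
      simp [hlt s hs.1.le hst]
    have h2 := hC τ ⟨hτ0, hτb⟩
    rw [h1, mul_zero] at h2
    exact abs_nonpos_iff.1 h2
  obtain ⟨δ, hδ, hδν⟩ : ∃ δ > 0, C * ν.real (Ioo τ (τ + δ)) ≤ 1 / 2 := by
    have h1 : Tendsto (fun n : ℕ => ν (Ioo τ (τ + 1 / ((n : ℝ) + 1)))) atTop (𝓝 0) := by
      have h2 := tendsto_measure_iInter_atTop (μ := ν)
        (s := fun n : ℕ => Ioo τ (τ + 1 / ((n : ℝ) + 1)))
        (fun n => measurableSet_Ioo.nullMeasurableSet)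
        (fun m n hmn => Ioo_subset_Ioo_right (by
          have := one_div_le_one_div_of_le (α := ℝ) (a := m + 1) (b := n + 1) (by positivity)
            (by gcongr)
          linarith))
        ⟨0, measure_ne_top _ _⟩
      have h3 : ⋂ n : ℕ, Ioo τ (τ + 1 / ((n : ℝ) + 1)) = ∅ := by
        ext x
        simp only [mem_iInter, mem_empty_iff_false, iff_false, not_forall]
        by_contra! hx
        obtain ⟨n, hn⟩ := exists_nat_one_div_lt (sub_pos.2 (hx 0).1)
        linarith [(hx n).2]
      rwa [h3, measure_empty] at h2
    have h4 := ((ENNReal.tendsto_toReal ENNReal.zero_ne_top).comp h1).const_mul C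
    simp only [ENNReal.toReal_zero, mul_zero] at h4
    obtain ⟨n, hn⟩ := (h4.eventually_le_const (show (0 : ℝ) < 1 / 2 by norm_num)).exists
    exact ⟨1 / ((n : ℝ) + 1), by positivity, hn⟩
  have hstep : ∀ M, 0 ≤ M → (∀ t ∈ Icc 0 b, t < τ + δ → |u t| ≤ M) →
      ∀ t ∈ Icc 0 b, t < τ + δ → |u t| ≤ M / 2 := by
    intro M hM0 hM t ht htδ
    have h1 : ∫ s in Iio t, |u s| ∂ν ≤ M * ν.real (Ioo τ (τ + δ)) := by
      calc ∫ s in Iio t, |u s| ∂ν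
          ≤ ∫ s in Iio t, (Ioo τ (τ + δ)).indicator (fun _ => M) s ∂ν := by
            refine integral_mono_of_nonneg (Eventually.of_forall fun s => abs_nonneg _)
              ((integrable_const M).indicator measurableSet_Ioo) ?_
            filter_upwards [ae_restrict_of_ae hν, ae_restrict_mem measurableSet_Iio] with s hs hst
            have hst : s < t := hst
            rcases lt_trichotomy s τ with h | h | h
            · simp [hlt s hs.1.le h, indicator_nonneg, hM0]
            · simp [h, hτu]
            · rw [indicator_of_mem (show s ∈ Ioo τ (τ + δ) from ⟨h, hst.trans htδ⟩)]
              exact hM s ⟨hs.1.le, hst.le.trans ht.2⟩ (hst.trans htδ)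
        _ ≤ ∫ s, (Ioo τ (τ + δ)).indicator (fun _ => M) s ∂ν :=
            setIntegral_le_integral ((integrable_const M).indicator measurableSet_Ioo)
              (Eventually.of_forall fun s => indicator_nonneg (fun _ _ => hM0) s)
        _ = M * ν.real (Ioo τ (τ + δ)) := by
            rw [integral_indicator measurableSet_Ioo, setIntegral_const, smul_eq_mul, mul_comm]
    calc |u t| ≤ C * (M * ν.real (Ioo τ (τ + δ))) :=
          (hC t ht).trans (mul_le_mul_of_nonneg_left h1 hC0)
      _ = M * (C * ν.real (Ioo τ (τ + δ))) := by ring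
      _ ≤ M * (1 / 2) := mul_le_mul_of_nonneg_left hδν hM0
      _ = M / 2 := by ring
  have hM₀0 : 0 ≤ M₀ := (abs_nonneg _).trans (hM₀ b ⟨hb.1, le_rfl⟩)
  have hiter : ∀ n : ℕ, ∀ t ∈ Icc 0 b, t < τ + δ → |u t| ≤ M₀ * (1 / 2) ^ n := by
    intro n
    induction n with
    | zero => intro t ht _; simpa using hM₀ t ht
    | succ n ih =>
      intro t ht htδ
      have := hstep _ (by positivity) ih t ht htδ
      rw [pow_succ]; linarith
  obtain ⟨t, htZ, htδ⟩ := exists_lt_of_csInf_lt hZn (show sInf Z < τ + δ by linarith)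
  have hlim : Tendsto (fun n : ℕ => M₀ * (1 / 2 : ℝ) ^ n) atTop (𝓝 0) := by
    simpa using (tendsto_pow_atTop_nhds_zero_of_lt_one (r := (1 / 2 : ℝ)) (by norm_num)
      (by norm_num)).const_mul M₀
  exact htZ.2 (abs_nonpos_iff.1 (ge_of_tendsto' hlim fun n => hiter n t htZ.1 htδ))

/-- Integration by parts for iterated integrals over `r ≤ s ≤ t`. -/
theorem setIntegral_mul_setIntegral_Iic {f g : ℝ → ℝ} {t : ℝ}
    (hf : IntegrableOn f (Iic t) ν) (hg : IntegrableOn g (Iic t) ν) :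
    ∫ s in Iic t, g s * ∫ r in Iic s, f r ∂ν ∂ν =
      ∫ r in Iic t, f r * (∫ s in Iic t, g s ∂ν - ∫ s in Iio r, g s ∂ν) ∂ν := by
  have hmeas : MeasurableSet {p : ℝ × ℝ | p.2 ≤ p.1} :=
    measurableSet_le measurable_snd measurable_fst
  have hint : Integrable (uncurry fun s r => {p : ℝ × ℝ | p.2 ≤ p.1}.indicator
      (fun p => g p.1 * f p.2) (s, r)) ((ν.restrict (Iic t)).prod (ν.restrict (Iic t))) :=
    (hg.mul_prod hf).indicator hmeas
  have hswap := integral_integral_swap hint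
  have hl : ∀ s ∈ Iic t, ∫ r in Iic t, {p : ℝ × ℝ | p.2 ≤ p.1}.indicator
      (fun p => g p.1 * f p.2) (s, r) ∂ν = g s * ∫ r in Iic s, f r ∂ν := by
    intro s hs
    have : ∀ r, {p : ℝ × ℝ | p.2 ≤ p.1}.indicator (fun p => g p.1 * f p.2) (s, r) =
        (Iic s).indicator (fun r => g s * f r) r := fun r => by
      by_cases h : r ≤ s <;> simp [h]
    simp_rw [this]
    rw [setIntegral_indicator measurableSet_Iic, Iic_inter_Iic, min_eq_right hs,
      integral_const_mul]
  have hr : ∀ r ∈ Iic t, ∫ s in Iic t, {p : ℝ × ℝ | p.2 ≤ p.1}.indicator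
      (fun p => g p.1 * f p.2) (s, r) ∂ν =
      f r * (∫ s in Iic t, g s ∂ν - ∫ s in Iio r, g s ∂ν) := by
    intro r hr
    have : ∀ s, {p : ℝ × ℝ | p.2 ≤ p.1}.indicator (fun p => g p.1 * f p.2) (s, r) =
        (Ici r).indicator (fun s => f r * g s) s := fun s => by
      by_cases h : r ≤ s <;> simp [h, mul_comm]
    simp_rw [this]
    have hr' : r ≤ t := hr
    rw [setIntegral_indicator measurableSet_Ici, integral_const_mul]
    congr 1
    have hd : Iic t ∩ Ici r = Iic t \ Iio r := by ext x; simp [and_comm]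
    rw [hd, setIntegral_sdiff measurableSet_Iio hg (fun x hx => (le_of_lt hx).trans hr')]
  rw [← setIntegral_congr_fun measurableSet_Iic hl, ← setIntegral_congr_fun measurableSet_Iic hr]
  exact hswap

/-- The diagonal term `s f(t) - t f(s)` vanishes at `s = t`, so its integral over the past is
continuous even when the measure has atoms. -/
theorem continuousOn_setIntegral_wronskian {f w : ℝ → ℝ} (hν : ∀ᵐ s ∂ν, s ∈ Ioo (0 : ℝ) 1)
    (hf : ContinuousOn f (Ico 0 1)) (hw : LocBdd w) (hwm : AEStronglyMeasurable w ν) :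
    ContinuousOn (fun t => ∫ s in Iic t, (s * f t - t * f s) * w s ∂ν) (Ico 0 1) := by
  intro t₀ ht₀
  obtain ⟨b, htb, hb⟩ := exists_between ht₀.2
  have hb0 : 0 ≤ b := ht₀.1.trans htb.le
  obtain ⟨M, hM⟩ := hf.locBdd b hb
  obtain ⟨W, hW⟩ := hw b hb
  have hM0 : 0 ≤ M := (abs_nonneg _).trans (hM 0 ⟨le_rfl, hb0⟩)
  have hfm := hf.aestronglyMeasurable_of_ae_mem hν
  have heq : (fun t => ∫ s in Iic t, (s * f t - t * f s) * w s ∂ν) =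
      fun t => ∫ s, (Iic t).indicator (fun s => (s * f t - t * f s) * w s) s ∂ν := by
    funext t; rw [integral_indicator measurableSet_Iic]
  rw [heq]
  have hnhds : ∀ᶠ t in 𝓝[Ico 0 1] t₀, t ∈ Icc 0 b := by
    filter_upwards [self_mem_nhdsWithin, mem_nhdsWithin_of_mem_nhds (Iio_mem_nhds htb)]
      with t h1 h2
    exact ⟨h1.1, le_of_lt h2⟩
  refine continuousWithinAt_of_dominated (bound := fun _ => (M + M) * W) ?_ ?_
    (integrable_const _) ?_
  · refine Eventually.of_forall fun t => AEStronglyMeasurable.indicator ?_ measurableSet_Iic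
    exact (((aestronglyMeasurable_id).mul_const _).sub (hfm.const_mul _)).mul hwm
  · filter_upwards [hnhds] with t ht
    filter_upwards [hν] with s hs
    have hW0 : 0 ≤ W := (abs_nonneg _).trans (hW 0 ⟨le_rfl, hb0⟩)
    by_cases hst : s ≤ t
    · rw [indicator_of_mem (show s ∈ Iic t from hst), Real.norm_eq_abs, abs_mul]
      have hsb : s ∈ Icc 0 b := ⟨hs.1.le, hst.trans ht.2⟩
      refine mul_le_mul ((abs_sub _ _).trans ?_) (hW s hsb) (abs_nonneg _) (by linarith)
      rw [abs_mul, abs_mul, abs_of_nonneg hs.1.le, abs_of_nonneg ht.1]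
      have h1 := hM t ht
      have h2 := hM s hsb
      have h3 : s * |f t| ≤ 1 * M := mul_le_mul hs.2.le h1 (abs_nonneg _) zero_le_one
      have h4 : t * |f s| ≤ 1 * M :=
        mul_le_mul (ht.2.trans hb.le) h2 (abs_nonneg _) zero_le_one
      linarith
    · rw [indicator_of_notMem (show s ∉ Iic t from hst), norm_zero]
      positivity
  · filter_upwards [hν] with s hs
    have hc : ContinuousOn (fun t => (s * f t - t * f s) * w s) (Ico 0 1) := by fun_prop
    have hc0 := hc t₀ ht₀
    rcases lt_trichotomy s t₀ with h | h | h
    · refine hc0.congr_of_eventuallyEq ?_ (by simp [h.le])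
      filter_upwards [mem_nhdsWithin_of_mem_nhds (Ioi_mem_nhds h)] with t ht
      rw [indicator_of_mem (mem_Iic.2 (le_of_lt (mem_Ioi.1 ht)))]
    · have hv : (s * f t₀ - t₀ * f s) * w s = 0 := by rw [h]; ring
      have hc1 : Tendsto (fun t => (s * f t - t * f s) * w s) (𝓝[Ico 0 1] t₀) (𝓝 0) := by
        have := hc0.tendsto
        rwa [hv] at this
      have hi : (Iic t₀).indicator (fun s => (s * f t₀ - t₀ * f s) * w s) s = 0 := by
        rw [indicator_of_mem (show s ∈ Iic t₀ from h.le), hv]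
      change Tendsto _ _ (𝓝 ((Iic t₀).indicator (fun s => (s * f t₀ - t₀ * f s) * w s) s))
      rw [hi]
      refine squeeze_zero_norm (fun t => norm_indicator_le_norm_self _ _) ?_
      simpa using hc1.norm
    · refine (continuousWithinAt_const (b := (0 : ℝ))).congr_of_eventuallyEq ?_
        (by simp [h])
      filter_upwards [mem_nhdsWithin_of_mem_nhds (Iio_mem_nhds h)] with t ht
      rw [indicator_of_notMem (fun hs' => not_le.2 (mem_Iio.1 ht) (mem_Iic.1 hs'))]

end FiniteMeasure

/-- The coefficient `R` on `[0, 1)` generated by the signed measure `ε ν`. -/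
noncomputable def halfR (ν : Measure ℝ) (ε c t : ℝ) : ℝ := c - ε * ∫ s in Iic t, s ∂ν

/-- The left limit of `halfR`. -/
noncomputable def halfRLeft (ν : Measure ℝ) (ε c t : ℝ) : ℝ := c - ε * ∫ s in Iio t, s ∂ν

/-- The density of the measure `d(1/R) / s` with respect to `ε ν`. -/
noncomputable def halfW (ν : Measure ℝ) (ε c t : ℝ) : ℝ :=
  (halfR ν ε c t * halfRLeft ν ε c t)⁻¹

/-- The transform on `[0, 1)`. -/
noncomputable def halfT (ν : Measure ℝ) (ε c : ℝ) (f : ℝ → ℝ) (t : ℝ) : ℝ :=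
  halfR ν ε c t * f t + t * (ε * ∫ s in Iic t, f s ∂ν)

/-- The restriction of a `BV₊` pair to `[0, 1)`. -/
structure HalfPair (ν : Measure ℝ) (ε c : ℝ) : Prop where
  ae_mem : ∀ᵐ s ∂ν, s ∈ Ioo (0 : ℝ) 1
  sign : ε = 1 ∨ ε = -1
  pos : ∀ t ∈ Ico (0 : ℝ) 1, 0 < halfR ν ε c t

namespace HalfPair

variable {ν : Measure ℝ} {ε c : ℝ}

theorem setIntegral_id_nonneg (H : HalfPair ν ε c) (S : Set ℝ) : 0 ≤ ∫ s in S, s ∂ν :=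
  setIntegral_nonneg_of_ae (H.ae_mem.mono fun _ hs => hs.1.le)

theorem setIntegral_Iic_zero (H : HalfPair ν ε c) (f : ℝ → ℝ) : ∫ s in Iic 0, f s ∂ν = 0 := by
  have h : ν (Iic 0) = 0 := by
    rw [measure_eq_zero_iff_ae_notMem]
    exact H.ae_mem.mono fun s hs => not_le.2 hs.1
  exact setIntegral_measure_zero _ h

theorem halfR_zero (H : HalfPair ν ε c) : halfR ν ε c 0 = c := by
  simp [halfR, H.setIntegral_Iic_zero]

theorem c_pos (H : HalfPair ν ε c) : 0 < c := by
  have := H.pos 0 ⟨le_rfl, zero_lt_one⟩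
  rwa [H.halfR_zero] at this

variable [IsFiniteMeasure ν]

theorem integrable_id (H : HalfPair ν ε c) : Integrable (fun s => s) ν := by
  refine Integrable.of_bound aestronglyMeasurable_id 1 ?_
  filter_upwards [H.ae_mem] with s hs
  rw [Real.norm_eq_abs, abs_of_pos hs.1]
  exact hs.2.le

theorem setIntegral_id_mono (H : HalfPair ν ε c) {S S' : Set ℝ} (h : S ⊆ S') :
    ∫ s in S, s ∂ν ≤ ∫ s in S', s ∂ν :=
  setIntegral_mono_set H.integrable_id.integrableOn
    (ae_restrict_of_ae (H.ae_mem.mono fun _ hs => hs.1.le)) h.eventuallyLE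

theorem exists_lower_bound (H : HalfPair ν ε c) {b : ℝ} (hb : b < 1) :
    ∃ δ > 0, ∀ t ∈ Icc 0 b, δ ≤ halfR ν ε c t ∧ δ ≤ halfRLeft ν ε c t := by
  rcases lt_or_ge b 0 with h0 | h0
  · exact ⟨1, one_pos, fun t ht => absurd (ht.1.trans ht.2) (not_le.2 h0)⟩
  rcases H.sign with rfl | rfl
  · refine ⟨_, H.pos b ⟨h0, hb⟩, fun t ht => ?_⟩
    have h1 := H.setIntegral_id_mono (Iic_subset_Iic.2 ht.2)
    have h2 := H.setIntegral_id_mono (Iio_subset_Iic_self (a := t))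
    constructor <;> simp only [halfR, halfRLeft] <;> linarith
  · refine ⟨c, H.c_pos, fun t _ => ?_⟩
    have h1 := H.setIntegral_id_nonneg (Iic t)
    have h2 := H.setIntegral_id_nonneg (Iio t)
    constructor <;> simp only [halfR, halfRLeft] <;> linarith

theorem halfRLeft_pos (H : HalfPair ν ε c) {t : ℝ} (ht : t ∈ Ico (0 : ℝ) 1) :
    0 < halfRLeft ν ε c t := by
  obtain ⟨δ, hδ, h⟩ := H.exists_lower_bound ht.2
  exact hδ.trans_le (h t ⟨ht.1, le_rfl⟩).2

theorem measurable_halfR : Measurable (halfR ν ε c) :=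
  ((measurable_setIntegral_Iic aestronglyMeasurable_id).const_mul ε).const_sub c

theorem measurable_halfW : Measurable (halfW ν ε c) :=
  (measurable_halfR.mul
    (((measurable_setIntegral_Iio aestronglyMeasurable_id).const_mul ε).const_sub c)).inv

theorem locBdd_inv_halfR (H : HalfPair ν ε c) : LocBdd fun t => (halfR ν ε c t)⁻¹ := by
  intro b hb
  obtain ⟨δ, hδ, h⟩ := H.exists_lower_bound hb
  refine ⟨δ⁻¹, fun t ht => ?_⟩
  have h1 := (h t ht).1
  rw [abs_of_pos (inv_pos.2 (hδ.trans_le h1))]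
  exact inv_anti₀ hδ h1

theorem locBdd_halfW (H : HalfPair ν ε c) : LocBdd (halfW ν ε c) := by
  intro b hb
  obtain ⟨δ, hδ, h⟩ := H.exists_lower_bound hb
  refine ⟨(δ * δ)⁻¹, fun t ht => ?_⟩
  obtain ⟨h1, h2⟩ := h t ht
  have h3 : δ * δ ≤ halfR ν ε c t * halfRLeft ν ε c t :=
    mul_le_mul h1 h2 hδ.le (hδ.le.trans h1)
  rw [halfW, abs_of_pos (inv_pos.2 ((mul_pos hδ hδ).trans_le h3))]
  exact inv_anti₀ (mul_pos hδ hδ) h3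

theorem halfW_pos (H : HalfPair ν ε c) {t : ℝ} (ht : t ∈ Ico (0 : ℝ) 1) : 0 < halfW ν ε c t :=
  inv_pos.2 (mul_pos (H.pos t ht) (H.halfRLeft_pos ht))

/-- The homogeneous equation `R y + p ∫ q y dν = 0` with `p q = t` has only the zero solution. -/
theorem eq_zero_of_homogeneous (H : HalfPair ν ε c) {y p q : ℝ → ℝ} (hy : LocBdd y)
    (hym : AEStronglyMeasurable y ν) (hqm : AEStronglyMeasurable q ν)
    (hpq : ∀ t ∈ Ico (0 : ℝ) 1, p t * q t = t) (hp : ∀ t ∈ Ico (0 : ℝ) 1, |p t| ≤ 1)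
    (hq : ∀ t ∈ Ico (0 : ℝ) 1, |q t| ≤ 1)
    (h : ∀ t ∈ Ico (0 : ℝ) 1,
      halfR ν ε c t * y t + p t * (ε * ∫ s in Iic t, q s * y s ∂ν) = 0) :
    ∀ t ∈ Ico (0 : ℝ) 1, y t = 0 := by
  have hqb : LocBdd q := fun b hb => ⟨1, fun s hs => hq s ⟨hs.1, hs.2.trans_lt hb⟩⟩
  refine eq_zero_of_abs_le_setIntegral_Iio H.ae_mem hy fun b hb => ?_
  obtain ⟨δ, hδ, hδR⟩ := H.exists_lower_bound hb
  refine ⟨δ⁻¹, (inv_pos.2 hδ).le, fun t ht => ?_⟩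
  have ht' : t ∈ Ico (0 : ℝ) 1 := ⟨ht.1, ht.2.trans_lt hb⟩
  have hleft : halfRLeft ν ε c t * y t = -(p t * (ε * ∫ s in Iio t, q s * y s ∂ν)) := by
    have h1 := h t ht'
    rw [setIntegral_Iic_eq_Iio_add ((hqb.mul hy).integrableOn H.ae_mem (hqm.mul hym) ht'.2)] at h1
    have h2 : halfR ν ε c t = halfRLeft ν ε c t - ε * (t * ν.real {t}) := by
      rw [halfR, setIntegral_Iic_eq_Iio_add H.integrable_id.integrableOn, halfRLeft]; ring
    rw [h2] at h1
    linear_combination h1 - ε * ν.real {t} * y t * hpq t ht'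
  have hint : |∫ s in Iio t, q s * y s ∂ν| ≤ ∫ s in Iio t, |y s| ∂ν := by
    refine norm_integral_le_of_norm_le (f := fun s => q s * y s) (g := fun s => |y s|)
      (((hy.integrableOn H.ae_mem hym ht'.2).mono_set Iio_subset_Iic_self).abs) ?_
    filter_upwards [ae_restrict_of_ae H.ae_mem] with s hs
    rw [Real.norm_eq_abs, abs_mul]
    exact mul_le_of_le_one_left (abs_nonneg _) (hq s ⟨hs.1.le, hs.2⟩)
  have hε : |ε| = 1 := by rcases H.sign with rfl | rfl <;> simp
  have h3 : δ * |y t| ≤ ∫ s in Iio t, |y s| ∂ν := by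
    calc δ * |y t| ≤ |halfRLeft ν ε c t| * |y t| :=
          mul_le_mul_of_nonneg_right ((hδR t ht).2.trans (le_abs_self _)) (abs_nonneg _)
      _ = |p t| * |∫ s in Iio t, q s * y s ∂ν| := by
          rw [← abs_mul, hleft, abs_neg, abs_mul, abs_mul, hε, one_mul]
      _ ≤ |∫ s in Iio t, q s * y s ∂ν| := mul_le_of_le_one_left (abs_nonneg _) (hp t ht')
      _ ≤ _ := hint
  rw [inv_mul_eq_div, le_div_iff₀ hδ, mul_comm]
  exact h3

/-- The integral of the formal inverse transform of `g`. -/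
theorem setIntegral_inverse (H : HalfPair ν ε c) {g : ℝ → ℝ} (hg : LocBdd g)
    (hgm : AEStronglyMeasurable g ν) {t : ℝ} (ht : t ∈ Ico (0 : ℝ) 1) :
    ε * ∫ s in Iic t, (g s * (halfR ν ε c s)⁻¹
        - s * (ε * ∫ r in Iic s, g r * halfW ν ε c r ∂ν)) ∂ν =
      halfR ν ε c t * (ε * ∫ s in Iic t, g s * halfW ν ε c s ∂ν) := by
  have hgw := hg.mul H.locBdd_halfW
  have hgwm : AEStronglyMeasurable (fun s => g s * halfW ν ε c s) ν :=
    hgm.mul measurable_halfW.aestronglyMeasurable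
  have hwi := hgw.integrableOn H.ae_mem hgwm ht.2
  have hi1 : IntegrableOn (fun s => g s * (halfR ν ε c s)⁻¹) (Iic t) ν :=
    (hg.mul H.locBdd_inv_halfR).integrableOn H.ae_mem
      (hgm.mul measurable_halfR.inv.aestronglyMeasurable) ht.2
  have hi2 : IntegrableOn (fun s => s * ∫ r in Iic s, g r * halfW ν ε c r ∂ν) (Iic t) ν :=
    (LocBdd.id.mul (hgw.setIntegral_Iic H.ae_mem)).integrableOn H.ae_mem
      (aestronglyMeasurable_id.mul (measurable_setIntegral_Iic hgwm).aestronglyMeasurable) ht.2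
  have hfub := setIntegral_mul_setIntegral_Iic hwi (H.integrable_id.integrableOn (s := Iic t))
  have hpt : ∀ᵐ r ∂ν.restrict (Iic t), g r * halfW ν ε c r *
      (∫ s in Iic t, s ∂ν - ∫ s in Iio r, s ∂ν) * ε =
      g r * (halfR ν ε c r)⁻¹ - halfR ν ε c t * (g r * halfW ν ε c r) := by
    filter_upwards [ae_restrict_of_ae H.ae_mem] with r hr
    have h1 : (∫ s in Iic t, s ∂ν - ∫ s in Iio r, s ∂ν) * ε =
        halfRLeft ν ε c r - halfR ν ε c t := by
      rw [halfRLeft, halfR]; ring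
    have h2 := (H.pos r ⟨hr.1.le, hr.2⟩).ne'
    have h3 := (H.halfRLeft_pos (t := r) ⟨hr.1.le, hr.2⟩).ne'
    rw [mul_assoc, h1, halfW]
    field_simp
  have hfub' : (∫ s in Iic t, s * ∫ r in Iic s, g r * halfW ν ε c r ∂ν ∂ν) * ε =
      ∫ r in Iic t, g r * (halfR ν ε c r)⁻¹ ∂ν -
        halfR ν ε c t * ∫ r in Iic t, g r * halfW ν ε c r ∂ν := by
    rw [hfub, ← integral_mul_const, integral_congr_ae hpt, integral_sub hi1 (hwi.const_mul _),
      integral_const_mul]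
  have hcomm : ∀ s, s * (ε * ∫ r in Iic s, g r * halfW ν ε c r ∂ν) =
      (s * ∫ r in Iic s, g r * halfW ν ε c r ∂ν) * ε := fun s => by ring
  simp_rw [hcomm]
  rw [integral_sub hi1 (hi2.mul_const _), integral_mul_const, hfub']
  ring

/-- `1 / R` is the primitive of `s / (R R⁻)` with respect to `ε ν`. -/
theorem inv_halfR_eq (H : HalfPair ν ε c) {t : ℝ} (ht : t ∈ Ico (0 : ℝ) 1) :
    (halfR ν ε c t)⁻¹ = c⁻¹ + ε * ∫ s in Iic t, s * halfW ν ε c s ∂ν := by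
  have hwm : AEStronglyMeasurable (fun s => s * halfW ν ε c s) ν :=
    aestronglyMeasurable_id.mul measurable_halfW.aestronglyMeasurable
  have hK := (LocBdd.id.mul H.locBdd_halfW).setIntegral_Iic H.ae_mem
  set h : ℝ → ℝ := fun t =>
    (halfR ν ε c t)⁻¹ - ε * ∫ s in Iic t, s * halfW ν ε c s ∂ν with hh
  have hb : LocBdd h := H.locBdd_inv_halfR.sub ((LocBdd.const ε).mul hK)
  have hm : AEStronglyMeasurable h ν :=
    (measurable_halfR.inv.sub
      ((measurable_setIntegral_Iic hwm).const_mul ε)).aestronglyMeasurable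
  have hzero := H.eq_zero_of_homogeneous (y := fun t => h t - c⁻¹) (p := fun _ => 1)
    (q := fun s => s) (hb.sub (LocBdd.const _)) (hm.sub aestronglyMeasurable_const)
    aestronglyMeasurable_id (fun _ _ => one_mul _) (by simp)
    (fun t ht => by rw [abs_of_nonneg ht.1]; exact ht.2.le) ?_ t ht
  · have : h t - c⁻¹ = 0 := hzero
    rw [hh] at this
    linarith
  intro t ht
  have hinv := H.setIntegral_inverse LocBdd.id aestronglyMeasurable_id ht
  have e1 : ∀ s, s * (halfR ν ε c s)⁻¹
      - s * (ε * ∫ r in Iic s, r * halfW ν ε c r ∂ν) = s * h s := fun s => by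
    rw [hh]; ring
  simp_rw [e1] at hinv
  have hsplit : ∫ s in Iic t, s * (h s - c⁻¹) ∂ν =
      ∫ s in Iic t, s * h s ∂ν - (∫ s in Iic t, s ∂ν) * c⁻¹ := by
    simp_rw [mul_sub]
    rw [integral_sub ((LocBdd.id.mul hb).integrableOn H.ae_mem
      (aestronglyMeasurable_id.mul hm) ht.2) (H.integrable_id.integrableOn.mul_const _),
      integral_mul_const]
  have hR : halfR ν ε c t * (halfR ν ε c t)⁻¹ = 1 := mul_inv_cancel₀ (H.pos t ht).ne'
  have hc : c * c⁻¹ = 1 := mul_inv_cancel₀ H.c_pos.ne'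
  have hA : ε * ∫ s in Iic t, s ∂ν = c - halfR ν ε c t := by rw [halfR]; ring
  have hht : h t = (halfR ν ε c t)⁻¹ - ε * ∫ s in Iic t, s * halfW ν ε c s ∂ν := rfl
  simp only [hsplit]
  rw [hht]
  linear_combination hinv - c⁻¹ * hA + hR - hc


theorem halfT_eq (H : HalfPair ν ε c) {f : ℝ → ℝ} (hf : ContinuousOn f (Ico 0 1)) {t : ℝ}
    (ht : t ∈ Ico (0 : ℝ) 1) :
    halfT ν ε c f t = c * f t - ε * ∫ s in Iic t, (s * f t - t * f s) * 1 ∂ν := by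
  have hi := hf.locBdd.integrableOn H.ae_mem (hf.aestronglyMeasurable_of_ae_mem H.ae_mem) ht.2
  simp_rw [mul_one]
  rw [integral_sub (H.integrable_id.integrableOn.mul_const _) (hi.const_mul _),
    integral_mul_const, integral_const_mul, halfT, halfR]
  ring

theorem continuousOn_halfT (H : HalfPair ν ε c) {f : ℝ → ℝ} (hf : ContinuousOn f (Ico 0 1)) :
    ContinuousOn (halfT ν ε c f) (Ico 0 1) := by
  refine ContinuousOn.congr ?_ fun t ht => H.halfT_eq hf ht
  exact (hf.const_mul c).sub ((continuousOn_setIntegral_wronskian H.ae_mem hf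
    (LocBdd.const 1) aestronglyMeasurable_const).const_mul ε)

theorem eq_of_halfT_eq (H : HalfPair ν ε c) {f₁ f₂ : ℝ → ℝ} (hf₁ : ContinuousOn f₁ (Ico 0 1))
    (hf₂ : ContinuousOn f₂ (Ico 0 1))
    (h : ∀ t ∈ Ico (0 : ℝ) 1, halfT ν ε c f₁ t = halfT ν ε c f₂ t) :
    ∀ t ∈ Ico (0 : ℝ) 1, f₁ t = f₂ t := by
  have hm₁ := hf₁.aestronglyMeasurable_of_ae_mem H.ae_mem
  have hm₂ := hf₂.aestronglyMeasurable_of_ae_mem H.ae_mem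
  have key := H.eq_zero_of_homogeneous (y := fun t => f₁ t - f₂ t) (p := fun t => t)
    (q := fun _ => 1) (hf₁.sub hf₂).locBdd (hm₁.sub hm₂) aestronglyMeasurable_const
    (fun t _ => mul_one t) (fun t ht => by rw [abs_of_nonneg ht.1]; exact ht.2.le) (by simp) ?_
  · exact fun t ht => sub_eq_zero.1 (key t ht)
  intro t ht
  have h1 := h t ht
  simp only [halfT] at h1
  simp only [one_mul]
  rw [integral_sub (hf₁.locBdd.integrableOn H.ae_mem hm₁ ht.2)
    (hf₂.locBdd.integrableOn H.ae_mem hm₂ ht.2)]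
  linear_combination h1

theorem tendsto_halfR (H : HalfPair ν ε c) :
    Tendsto (halfR ν ε c) (𝓝[<] 1) (𝓝 (c - ε * ∫ s, s ∂ν)) :=
  ((tendsto_setIntegral_Iic_left H.ae_mem H.integrable_id).const_mul ε).const_sub c

/-- If `R` stays away from zero, the primitive of `g / (R R⁻)` has a limit at `1`. -/
theorem exists_tendsto_of_lower_bound (H : HalfPair ν ε c) {g : ℝ → ℝ}
    (hg : ContinuousOn g (Icc 0 1)) {δ : ℝ} (hδ : 0 < δ)
    (h : ∀ t, δ ≤ halfR ν ε c t ∧ δ ≤ halfRLeft ν ε c t) :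
    ∃ L, Tendsto (fun t => halfR ν ε c t * (ε * ∫ s in Iic t, g s * halfW ν ε c s ∂ν))
      (𝓝[<] 1) (𝓝 L) := by
  obtain ⟨M, hM⟩ := isCompact_Icc.exists_bound_of_continuousOn hg
  have hgm := (hg.mono Ico_subset_Icc_self).aestronglyMeasurable_of_ae_mem H.ae_mem
  have hint : Integrable (fun s => g s * halfW ν ε c s) ν := by
    refine Integrable.of_bound (hgm.mul measurable_halfW.aestronglyMeasurable)
      (M * (δ * δ)⁻¹) ?_
    filter_upwards [H.ae_mem] with s hs
    have h1 := hM s ⟨hs.1.le, hs.2.le⟩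
    have h2 := H.halfW_pos ⟨hs.1.le, hs.2⟩
    rw [norm_mul, Real.norm_eq_abs (halfW ν ε c s), abs_of_pos h2]
    refine mul_le_mul h1 ?_ h2.le ((norm_nonneg _).trans h1)
    exact inv_anti₀ (mul_pos hδ hδ)
      (mul_le_mul (h s).1 (h s).2 hδ.le (hδ.le.trans (h s).1))
  exact ⟨_, H.tendsto_halfR.mul ((tendsto_setIntegral_Iic_left H.ae_mem hint).const_mul ε)⟩

/-- If `R` decreases to zero at `1`, then `R ∫ g / (R R⁻) dν` tends to `g 1`. -/
theorem tendsto_of_halfR_tendsto_zero (H : HalfPair ν 1 c) {g : ℝ → ℝ}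
    (hg : ContinuousOn g (Icc 0 1)) (h0 : Tendsto (halfR ν 1 c) (𝓝[<] 1) (𝓝 0)) :
    Tendsto (fun t => halfR ν 1 c t * ∫ s in Iic t, g s * halfW ν 1 c s ∂ν)
      (𝓝[<] 1) (𝓝 (g 1)) := by
  have hev : ∀ᶠ t in 𝓝[<] (1 : ℝ), t ∈ Ico (0 : ℝ) 1 := Ico_mem_nhdsLT zero_lt_one
  set h : ℝ → ℝ := fun s => g s - s * g 1 with hh
  have hhc : ContinuousOn h (Icc 0 1) := hg.sub (by fun_prop)
  have hhc' := hhc.mono Ico_subset_Icc_self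
  have hhm := hhc'.aestronglyMeasurable_of_ae_mem H.ae_mem
  have hhi : ∀ t < (1 : ℝ), IntegrableOn (fun s => h s * halfW ν 1 c s) (Iic t) ν := fun t ht =>
    (hhc'.locBdd.mul H.locBdd_halfW).integrableOn H.ae_mem
      (hhm.mul measurable_halfW.aestronglyMeasurable) ht
  have hsi : ∀ t < (1 : ℝ), IntegrableOn (fun s => s * halfW ν 1 c s) (Iic t) ν := fun t ht =>
    (LocBdd.id.mul H.locBdd_halfW).integrableOn H.ae_mem
      (aestronglyMeasurable_id.mul measurable_halfW.aestronglyMeasurable) ht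
  have hs_eq : ∀ t ∈ Ico (0 : ℝ) 1,
      halfR ν 1 c t * ∫ s in Iic t, s * halfW ν 1 c s ∂ν = 1 - halfR ν 1 c t * c⁻¹ := by
    intro t ht
    have h1 := H.inv_halfR_eq ht
    have h2 : halfR ν 1 c t * (halfR ν 1 c t)⁻¹ = 1 := mul_inv_cancel₀ (H.pos t ht).ne'
    linear_combination h2 - halfR ν 1 c t * h1
  have hsmall : Tendsto (fun t => halfR ν 1 c t * ∫ s in Iic t, h s * halfW ν 1 c s ∂ν)
      (𝓝[<] 1) (𝓝 0) := by
    rw [Metric.tendsto_nhds]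
    intro η hη
    have hlim : Tendsto h (𝓝[<] 1) (𝓝 0) := by
      have h1 : Tendsto h (𝓝[Icc 0 1] 1) (𝓝 (h 1)) := hhc 1 ⟨zero_le_one, le_rfl⟩
      have h2 : h 1 = 0 := by simp [hh]
      rw [h2] at h1
      rw [← nhdsWithin_Ico_eq_nhdsLT (zero_lt_one (α := ℝ))]
      exact h1.mono_left (nhdsWithin_mono _ Ico_subset_Icc_self)
    have hbd : ∀ᶠ s in 𝓝[<] (1 : ℝ), |h s| ≤ η / 4 := by
      have := hlim.abs
      rw [abs_zero] at this
      exact this.eventually_le_const (by positivity)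
    obtain ⟨a, ha, hab⟩ := (mem_nhdsLT_iff_exists_Ioo_subset' (zero_lt_one (α := ℝ))).1
      (hbd.and (Ioo_mem_nhdsLT (show (1 / 2 : ℝ) < 1 by norm_num)))
    set D := ∫ s in Iic a, |h s * halfW ν 1 c s| ∂ν with hD
    have hRD : ∀ᶠ t in 𝓝[<] (1 : ℝ), halfR ν 1 c t * D < η / 2 := by
      have := h0.mul_const D
      rw [zero_mul] at this
      exact this.eventually_lt_const (by positivity)
    filter_upwards [hRD, hev, Ioo_mem_nhdsLT ha] with t hRt ht hat
    have hRpos := H.pos t ht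
    have hle : |∫ s in Iic t, h s * halfW ν 1 c s ∂ν| ≤
        D + η / 2 * ∫ s in Iic t, s * halfW ν 1 c s ∂ν := by
      have hDi : IntegrableOn ((Iic a).indicator fun s => |h s * halfW ν 1 c s|) (Iic t) ν :=
        (hhi t ht.2).abs.indicator measurableSet_Iic
      have hD' : D = ∫ s in Iic t, (Iic a).indicator (fun s => |h s * halfW ν 1 c s|) s ∂ν := by
        rw [setIntegral_indicator measurableSet_Iic, Iic_inter_Iic, min_eq_right hat.1.le]
      rw [hD', ← integral_const_mul, ← integral_add hDi ((hsi t ht.2).const_mul _)]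
      refine norm_integral_le_of_norm_le (f := fun s => h s * halfW ν 1 c s)
        (hDi.add ((hsi t ht.2).const_mul _)) ?_
      filter_upwards [ae_restrict_of_ae H.ae_mem] with s hs
      have hw := H.halfW_pos ⟨hs.1.le, hs.2⟩
      rw [Real.norm_eq_abs]
      by_cases hsa : s ≤ a
      · rw [indicator_of_mem (mem_Iic.2 hsa)]
        have := mul_pos (half_pos hη) (mul_pos hs.1 hw)
        linarith
      · rw [indicator_of_notMem (fun hs' => hsa (mem_Iic.1 hs')), zero_add, abs_mul, abs_of_pos hw,
          ← mul_assoc]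
        obtain ⟨h1, h2⟩ := hab ⟨not_le.1 hsa, hs.2⟩
        refine mul_le_mul_of_nonneg_right (h1.trans ?_) hw.le
        nlinarith [h2.1]
    rw [Real.dist_eq, sub_zero, abs_mul, abs_of_pos hRpos]
    have hRs := hs_eq t ht
    have hRc : 0 ≤ halfR ν 1 c t * c⁻¹ := mul_nonneg hRpos.le (inv_nonneg.2 H.c_pos.le)
    calc halfR ν 1 c t * |∫ s in Iic t, h s * halfW ν 1 c s ∂ν|
        ≤ halfR ν 1 c t * (D + η / 2 * ∫ s in Iic t, s * halfW ν 1 c s ∂ν) :=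
          mul_le_mul_of_nonneg_left hle hRpos.le
      _ = halfR ν 1 c t * D + η / 2 * (1 - halfR ν 1 c t * c⁻¹) := by rw [← hRs]; ring
      _ < η := by nlinarith
  have hmain : Tendsto (fun t => halfR ν 1 c t * (∫ s in Iic t, h s * halfW ν 1 c s ∂ν) +
      (1 - halfR ν 1 c t * c⁻¹) * g 1) (𝓝[<] 1) (𝓝 (g 1)) := by
    have := hsmall.add (((h0.mul_const c⁻¹).const_sub 1).mul_const (g 1))
    simpa using this
  refine hmain.congr' ?_
  filter_upwards [hev] with t ht
  rw [← hs_eq t ht, mul_assoc, ← mul_add, ← integral_mul_const,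
    ← integral_add (hhi t ht.2) ((hsi t ht.2).mul_const _)]
  congr 1
  refine integral_congr_ae (Eventually.of_forall fun s => ?_)
  simp only [hh]
  ring

theorem exists_tendsto_primitive (H : HalfPair ν ε c) {g : ℝ → ℝ}
    (hg : ContinuousOn g (Icc 0 1)) :
    ∃ L, Tendsto (fun t => halfR ν ε c t * (ε * ∫ s in Iic t, g s * halfW ν ε c s ∂ν))
      (𝓝[<] 1) (𝓝 L) := by
  rcases H.sign with rfl | rfl
  · have hlim := H.tendsto_halfR
    have hnn : 0 ≤ c - 1 * ∫ s, s ∂ν := ge_of_tendsto hlim <| by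
      filter_upwards [Ico_mem_nhdsLT (zero_lt_one (α := ℝ))] with t ht
      exact (H.pos t ht).le
    rcases hnn.eq_or_lt with h0 | h0
    · rw [← h0] at hlim
      exact ⟨g 1, by simpa only [one_mul] using H.tendsto_of_halfR_tendsto_zero hg hlim⟩
    · refine H.exists_tendsto_of_lower_bound hg h0 fun t => ?_
      have h1 := H.setIntegral_id_mono (subset_univ (Iic t))
      have h2 := H.setIntegral_id_mono (subset_univ (Iio t))
      rw [setIntegral_univ] at h1 h2
      constructor <;> simp only [halfR, halfRLeft] <;> linarith
  · refine H.exists_tendsto_of_lower_bound hg H.c_pos fun t => ?_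
    have h1 := H.setIntegral_id_nonneg (Iic t)
    have h2 := H.setIntegral_id_nonneg (Iio t)
    constructor <;> simp only [halfR, halfRLeft] <;> linarith

/-- Surjectivity of the transform on `[0, 1)`. -/
theorem exists_halfT_eq (H : HalfPair ν ε c) {g : ℝ → ℝ} (hg : ContinuousOn g (Icc 0 1)) :
    ∃ f : ℝ → ℝ, ContinuousOn f (Ico 0 1) ∧ (∀ t ∈ Ico (0 : ℝ) 1, halfT ν ε c f t = g t) ∧
      (∃ L, Tendsto (fun t => halfR ν ε c t * f t) (𝓝[<] 1) (𝓝 L)) ∧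
      ∃ L, Tendsto (fun t => ε * ∫ s in Iic t, f s ∂ν) (𝓝[<] 1) (𝓝 L) := by
  have hg' := hg.mono Ico_subset_Icc_self
  have hgm := hg'.aestronglyMeasurable_of_ae_mem H.ae_mem
  have hwm : AEStronglyMeasurable (halfW ν ε c) ν := measurable_halfW.aestronglyMeasurable
  set J : ℝ → ℝ := fun t => ε * ∫ s in Iic t, g s * halfW ν ε c s ∂ν with hJ
  set f : ℝ → ℝ := fun t => g t * (halfR ν ε c t)⁻¹ - t * J t with hf
  have hfint : ∀ t ∈ Ico (0 : ℝ) 1, ε * ∫ s in Iic t, f s ∂ν = halfR ν ε c t * J t :=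
    fun t ht => H.setIntegral_inverse hg'.locBdd hgm ht
  have hRf : ∀ t ∈ Ico (0 : ℝ) 1, halfR ν ε c t * f t = g t - t * (halfR ν ε c t * J t) := by
    intro t ht
    have h2 : halfR ν ε c t * (halfR ν ε c t)⁻¹ = 1 := mul_inv_cancel₀ (H.pos t ht).ne'
    simp only [hf]
    linear_combination g t * h2
  have hev : ∀ᶠ t in 𝓝[<] (1 : ℝ), t ∈ Ico (0 : ℝ) 1 := Ico_mem_nhdsLT zero_lt_one
  obtain ⟨L, hL⟩ := H.exists_tendsto_primitive hg
  refine ⟨f, ?_, fun t ht => ?_, ⟨g 1 - 1 * L, ?_⟩, ⟨L, ?_⟩⟩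
  · refine ((hg'.mul_const c⁻¹).add ((continuousOn_setIntegral_wronskian H.ae_mem hg'
      H.locBdd_halfW hwm).const_mul ε)).congr fun t ht => ?_
    have hi1 : IntegrableOn (fun s => s * halfW ν ε c s) (Iic t) ν :=
      (LocBdd.id.mul H.locBdd_halfW).integrableOn H.ae_mem
        (aestronglyMeasurable_id.mul hwm) ht.2
    have hi2 : IntegrableOn (fun s => g s * halfW ν ε c s) (Iic t) ν :=
      (hg'.locBdd.mul H.locBdd_halfW).integrableOn H.ae_mem (hgm.mul hwm) ht.2
    have e : ∀ s, (s * g t - t * g s) * halfW ν ε c s =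
        g t * (s * halfW ν ε c s) - t * (g s * halfW ν ε c s) := fun s => by ring
    change f t = g t * c⁻¹ + ε * ∫ s in Iic t, (s * g t - t * g s) * halfW ν ε c s ∂ν
    simp_rw [e]
    rw [integral_sub (hi1.const_mul _) (hi2.const_mul _), integral_const_mul,
      integral_const_mul]
    simp only [hf, hJ]
    rw [H.inv_halfR_eq ht]
    ring
  · rw [halfT, hfint t ht, hRf t ht]
    ring
  · have hg1 : Tendsto g (𝓝[<] 1) (𝓝 (g 1)) := by
      rw [← nhdsWithin_Ico_eq_nhdsLT (zero_lt_one (α := ℝ))]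
      exact (hg 1 ⟨zero_le_one, le_rfl⟩).tendsto.mono_left
        (nhdsWithin_mono _ Ico_subset_Icc_self)
    have ht1 : Tendsto (fun t : ℝ => t) (𝓝[<] 1) (𝓝 1) := tendsto_id.mono_left nhdsWithin_le_nhds
    refine (hg1.sub (ht1.mul hL)).congr' ?_
    filter_upwards [hev] with t ht using (hRf t ht).symm
  · refine hL.congr' ?_
    filter_upwards [hev] with t ht using (hfint t ht).symm

end HalfPair

theorem continuousOn_Ioo_of_halves {f : ℝ → ℝ} (h₁ : ContinuousOn f (Ico 0 1))
    (h₂ : ContinuousOn (fun t => f (-t)) (Ico 0 1)) : ContinuousOn f (Ioo (-1) 1) := by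
  have h₂' : ContinuousOn f (Ioc (-1) 0) := by
    have := h₂.comp (continuousOn_neg (s := Ioc (-1 : ℝ) 0))
      fun t ht => ⟨by linarith [ht.2], by linarith [ht.1]⟩
    exact this.congr fun t _ => by simp
  intro t ht
  rcases lt_trichotomy t 0 with h | rfl | h
  · exact (h₂'.continuousAt (Ioc_mem_nhds ht.1 h)).continuousWithinAt
  · exact ((h₂' 0 (by simp)).union (h₁ 0 (by simp))).mono fun s hs =>
      (le_total s 0).imp (fun h => ⟨hs.1, h⟩) fun h => ⟨h, hs.2⟩
  · exact (h₁.continuousAt (Ico_mem_nhds h ht.2)).continuousWithinAt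

theorem tendsto_nhdsGT_neg_one_iff {F : ℝ → ℝ} {L : ℝ} :
    Tendsto F (𝓝[>] (-1)) (𝓝 L) ↔ Tendsto (fun t => F (-t)) (𝓝[<] 1) (𝓝 L) := by
  refine ⟨fun h => h.comp tendsto_neg_nhdsLT, fun h => ?_⟩
  have h1 : Tendsto (fun t : ℝ => -t) (𝓝[>] (-1)) (𝓝[<] 1) := by
    simpa using tendsto_neg_nhdsGT (a := (-1 : ℝ))
  simpa [Function.comp_def] using h.comp h1

theorem setIntegral_Iic_restrict {ν : Measure ℝ} (f : ℝ → ℝ) {t : ℝ} (ht : t < 1) :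
    ∫ s in Iic t, f s ∂(ν.restrict (Ioo 0 1)) = ∫ s in Ioc 0 t, f s ∂ν := by
  rw [Measure.restrict_restrict measurableSet_Iic]
  congr 2
  ext s
  simp only [mem_inter_iff, mem_Iic, mem_Ioo, mem_Ioc]
  exact ⟨fun h => ⟨h.2.1, h.1⟩, fun h => ⟨h.2, h.1, h.2.trans_lt ht⟩⟩

theorem setIntegral_Iic_restrict_map_neg {ν : Measure ℝ} (f : ℝ → ℝ) {t : ℝ} (ht : t < 1) :
    ∫ s in Iic t, f s ∂((ν.map Neg.neg).restrict (Ioo 0 1)) = ∫ s in Ico (-t) 0, f (-s) ∂ν := by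
  have h : MeasurableEmbedding (Neg.neg : ℝ → ℝ) := (Homeomorph.neg ℝ).measurableEmbedding
  rw [setIntegral_Iic_restrict f ht, h.setIntegral_map f (Ioc 0 t)]
  simp

namespace NormBV0

theorem BVplus.exists_signed {P : NormBV0} (hP : P.BVplus) :
    ∃ (ν : Measure ℝ) (ε : ℝ), IsFiniteMeasure ν ∧ (ε = 1 ∨ ε = -1) ∧
      ∀ S f, P.integ S f = ε * ∫ s in S, f s ∂ν := by
  obtain ⟨hp, hm, -, h | h⟩ := hP
  · refine ⟨P.νp, 1, ⟨?_⟩, Or.inl rfl, fun S f => by simp [integ, h]⟩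
    rw [← measure_add_measure_compl (measurableSet_Ioo (a := (-1 : ℝ)) (b := 1)), P.supp_p,
      add_zero]
    exact hp.lt_top
  · refine ⟨P.νm, -1, ⟨?_⟩, Or.inr rfl, fun S f => by simp [integ, h]⟩
    rw [← measure_add_measure_compl (measurableSet_Ioo (a := (-1 : ℝ)) (b := 1)), P.supp_m,
      add_zero]
    exact hm.lt_top

/-- The measures `ν₁`, `ν₂` on `(0, 1)` represent the right half and the reflected left half of
the signed measure of `P`. -/
structure IsSplit (P : NormBV0) (ν₁ ν₂ : Measure ℝ) (ε : ℝ) : Prop where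
  finite₁ : IsFiniteMeasure ν₁
  finite₂ : IsFiniteMeasure ν₂
  half₁ : HalfPair ν₁ ε (P.R 0)
  half₂ : HalfPair ν₂ ε (P.R 0)
  R₁ : ∀ t ∈ Ico (0 : ℝ) 1, P.R t = halfR ν₁ ε (P.R 0) t
  R₂ : ∀ t ∈ Ico (0 : ℝ) 1, P.R (-t) = halfR ν₂ ε (P.R 0) t
  integ₁ : ∀ f, ∀ t ∈ Ico (0 : ℝ) 1, P.integ (Ioc 0 t) f = ε * ∫ s in Iic t, f s ∂ν₁
  integ₂ : ∀ f, ∀ t ∈ Ico (0 : ℝ) 1, P.integ (Ico (-t) 0) f = ε * ∫ s in Iic t, f (-s) ∂ν₂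

theorem BVplus.exists_isSplit {P : NormBV0} (hP : P.BVplus) :
    ∃ (ν₁ ν₂ : Measure ℝ) (ε : ℝ), P.IsSplit ν₁ ν₂ ε := by
  obtain ⟨ν, ε, hfin, hε, hint⟩ := hP.exists_signed
  have hR := hP.2.2.1
  have h₁ : ∀ f, ∀ t ∈ Ico (0 : ℝ) 1, P.integ (Ioc 0 t) f =
      ε * ∫ s in Iic t, f s ∂(ν.restrict (Ioo 0 1)) := fun f t ht => by
    rw [hint, setIntegral_Iic_restrict f ht.2]
  have h₂ : ∀ f, ∀ t ∈ Ico (0 : ℝ) 1, P.integ (Ico (-t) 0) f =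
      ε * ∫ s in Iic t, f (-s) ∂((ν.map Neg.neg).restrict (Ioo 0 1)) := fun f t ht => by
    rw [hint, setIntegral_Iic_restrict_map_neg (fun s => f (-s)) ht.2]
    simp
  have hR₁ : ∀ t ∈ Ico (0 : ℝ) 1, P.R t = halfR (ν.restrict (Ioo 0 1)) ε (P.R 0) t :=
    fun t ht => by rw [halfR, ← h₁ (fun s => s) t ht]; exact P.fund_pos t ht
  have hR₂ : ∀ t ∈ Ico (0 : ℝ) 1,
      P.R (-t) = halfR ((ν.map Neg.neg).restrict (Ioo 0 1)) ε (P.R 0) t := fun t ht => by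
    have h := h₂ (fun s => s) t ht
    rw [integral_neg] at h
    have hf : P.R (-t) = P.R 0 + P.integ (Ico (-t) 0) (fun s => s) :=
      P.fund_neg (-t) ⟨by linarith [ht.2], by linarith [ht.1]⟩
    rw [hf, h, halfR]
    ring
  exact ⟨ν.restrict (Ioo 0 1), (ν.map Neg.neg).restrict (Ioo 0 1), ε, inferInstance,
    inferInstance,
    ⟨ae_restrict_mem measurableSet_Ioo, hε,
      fun t ht => hR₁ t ht ▸ hR t ⟨by linarith [ht.1], ht.2⟩⟩,
    ⟨ae_restrict_mem measurableSet_Ioo, hε,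
      fun t ht => hR₂ t ht ▸ hR (-t) ⟨by linarith [ht.2], by linarith [ht.1]⟩⟩,
    hR₁, hR₂, h₁, h₂⟩

namespace IsSplit

variable {P : NormBV0} {ν₁ ν₂ : Measure ℝ} {ε : ℝ}

theorem T₁ (H : P.IsSplit ν₁ ν₂ ε) (f : ℝ → ℝ) {t : ℝ} (ht : t ∈ Ico (0 : ℝ) 1) :
    P.T f t = halfT ν₁ ε (P.R 0) f t := by
  rw [halfT, ← H.R₁ t ht, ← H.integ₁ f t ht, T]
  split_ifs with h
  · rfl
  · have : t = 0 := le_antisymm (not_lt.1 h) ht.1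
    simp [this]

theorem T₂ (H : P.IsSplit ν₁ ν₂ ε) (f : ℝ → ℝ) {t : ℝ} (ht : t ∈ Ico (0 : ℝ) 1) :
    P.T f (-t) = halfT ν₂ ε (P.R 0) (fun s => f (-s)) t := by
  rw [halfT, ← H.R₂ t ht, ← H.integ₂ f t ht, T, if_neg (by linarith [ht.1])]
  ring

end IsSplit

end NormBV0

theorem ContinuousOn.comp_neg_Ico {f : ℝ → ℝ} (hf : ContinuousOn f (Ioo (-1) 1)) :
    ContinuousOn (fun t => f (-t)) (Ico 0 1) :=
  hf.comp continuousOn_neg fun t ht => ⟨by linarith [ht.2], by linarith [ht.1]⟩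

theorem forall_mem_Ioo_of_halves {p : ℝ → Prop} (h₁ : ∀ t ∈ Ico (0 : ℝ) 1, p t)
    (h₂ : ∀ t ∈ Ico (0 : ℝ) 1, p (-t)) : ∀ t ∈ Ioo (-1 : ℝ) 1, p t := by
  intro t ht
  rcases le_total 0 t with h | h
  · exact h₁ t ⟨h, ht.2⟩
  · simpa using h₂ (-t) ⟨by linarith, by linarith [ht.1]⟩

/-- If `(R,ν)` is of class `BV₊` on `(-1,1)`, then (a) for every
`f ∈ D_{R,ν}` the transform `T_{R,ν} f` extends continuously to `[-1,1]`, and (b) for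
every continuous `g : [-1,1] → ℝ` there is exactly one `f ∈ D_{R,ν}` (up to its values on
`(-1,1)`) with `T_{R,ν} f = g` on `(-1,1)`. -/
theorem bv0_bijection_full (P : NormBV0) (hP : P.BVplus) :
    (∀ f : ℝ → ℝ, P.memD f → ∃ g : ℝ → ℝ, ContinuousOn g (Set.Icc (-1 : ℝ) 1) ∧
      ∀ t ∈ Set.Ioo (-1 : ℝ) 1, g t = P.T f t) ∧
    (∀ g : ℝ → ℝ, ContinuousOn g (Set.Icc (-1 : ℝ) 1) →
      (∃ f : ℝ → ℝ, P.memD f ∧ ∀ t ∈ Set.Ioo (-1 : ℝ) 1, P.T f t = g t) ∧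
      (∀ f₁ f₂ : ℝ → ℝ, P.memD f₁ → P.memD f₂ →
        (∀ t ∈ Set.Ioo (-1 : ℝ) 1, P.T f₁ t = g t) →
        (∀ t ∈ Set.Ioo (-1 : ℝ) 1, P.T f₂ t = g t) →
        ∀ t ∈ Set.Ioo (-1 : ℝ) 1, f₁ t = f₂ t)) := by
  obtain ⟨ν₁, ν₂, ε, H⟩ := hP.exists_isSplit
  have := H.finite₁
  have := H.finite₂
  have hsub₁ : Ico (0 : ℝ) 1 ⊆ Ioo (-1) 1 := fun t ht => ⟨by linarith [ht.1], ht.2⟩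
  have hsub₂ : ∀ t ∈ Ico (0 : ℝ) 1, -t ∈ Ioo (-1 : ℝ) 1 :=
    fun t ht => ⟨by linarith [ht.2], by linarith [ht.1]⟩
  have hev : ∀ᶠ t in 𝓝[<] (1 : ℝ), t ∈ Ico (0 : ℝ) 1 := Ico_mem_nhdsLT zero_lt_one
  have hid : Tendsto (fun t : ℝ => t) (𝓝[<] 1) (𝓝 1) := tendsto_id.mono_left nhdsWithin_le_nhds
  refine ⟨fun f hf => ?_, fun g hg => ⟨?_, fun f₁ f₂ hf₁ hf₂ h₁ h₂ => ?_⟩⟩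
  · obtain ⟨hfc, ⟨A, hA⟩, ⟨B, hB⟩, ⟨C, hC⟩, ⟨D, hD⟩⟩ := hf
    have hT : ContinuousOn (P.T f) (Ioo (-1) 1) := continuousOn_Ioo_of_halves
      ((H.half₁.continuousOn_halfT (hfc.mono hsub₁)).congr fun t ht => H.T₁ f ht)
      ((H.half₂.continuousOn_halfT hfc.comp_neg_Ico).congr fun t ht => H.T₂ f ht)
    have hright : Tendsto (P.T f) (𝓝[<] 1) (𝓝 (A + 1 * C)) := by
      refine (hA.add (hid.mul hC)).congr' ?_
      filter_upwards [Ioo_mem_nhdsLT (zero_lt_one (α := ℝ))] with t ht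
      rw [NormBV0.T, if_pos ht.1]
    have hleft : Tendsto (P.T f) (𝓝[>] (-1)) (𝓝 (B - (-1) * D)) := by
      refine (hB.sub ((tendsto_id.mono_left nhdsWithin_le_nhds).mul hD)).congr' ?_
      filter_upwards [Ioo_mem_nhdsGT (show (-1 : ℝ) < 0 by norm_num)] with t ht
      rw [NormBV0.T, if_neg (not_lt.2 ht.2.le), id]
    refine ⟨extendFrom (Ioo (-1) 1) (P.T f),
      continuousOn_Icc_extendFrom_Ioo hT hleft hright, fun t ht => ?_⟩
    exact extendFrom_eq (subset_closure ht) (hT t ht)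
  · obtain ⟨f₁, hc₁, hT₁, ⟨A, hA⟩, ⟨C, hC⟩⟩ := H.half₁.exists_halfT_eq (g := g)
      (hg.mono (Icc_subset_Icc_left (by norm_num)))
    obtain ⟨f₂, hc₂, hT₂, ⟨B, hB⟩, ⟨D, hD⟩⟩ := H.half₂.exists_halfT_eq (g := fun t => g (-t))
      (hg.comp continuousOn_neg fun t ht => ⟨by linarith [ht.2], by linarith [ht.1]⟩)
    have hzero : f₁ 0 = f₂ 0 := by
      have h0 : (0 : ℝ) ∈ Ico (0 : ℝ) 1 := by simp
      have e₁ := hT₁ 0 h0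
      have e₂ := hT₂ 0 h0
      rw [halfT, H.half₁.halfR_zero, zero_mul, add_zero] at e₁
      rw [halfT, H.half₂.halfR_zero, zero_mul, add_zero, neg_zero] at e₂
      exact mul_left_cancel₀ H.half₁.c_pos.ne' (e₁.trans e₂.symm)
    set f : ℝ → ℝ := fun t => if 0 ≤ t then f₁ t else f₂ (-t) with hf
    have hf₁ : ∀ t, 0 ≤ t → f t = f₁ t := fun t ht => if_pos ht
    have hf₂ : ∀ t, 0 ≤ t → f (-t) = f₂ t := fun t ht => by
      rcases ht.eq_or_lt with rfl | h
      · rw [neg_zero, hf₁ 0 le_rfl, hzero]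
      · simp [hf, h]
    have hi₁ : ∀ t, ∫ s in Iic t, f s ∂ν₁ = ∫ s in Iic t, f₁ s ∂ν₁ := fun t =>
      integral_congr_ae (ae_restrict_of_ae
        (H.half₁.ae_mem.mono fun s hs => hf₁ s hs.1.le))
    have hi₂ : ∀ t, ∫ s in Iic t, f (-s) ∂ν₂ = ∫ s in Iic t, f₂ s ∂ν₂ := fun t =>
      integral_congr_ae (ae_restrict_of_ae
        (H.half₂.ae_mem.mono fun s hs => hf₂ s hs.1.le))
    refine ⟨f, ⟨continuousOn_Ioo_of_halves (hc₁.congr fun t ht => hf₁ t ht.1)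
      (hc₂.congr fun t ht => hf₂ t ht.1), ⟨A, ?_⟩, ⟨B, ?_⟩, ⟨C, ?_⟩, ⟨D, ?_⟩⟩, ?_⟩
    · refine hA.congr' ?_
      filter_upwards [hev] with t ht
      rw [H.R₁ t ht, hf₁ t ht.1]
    · refine tendsto_nhdsGT_neg_one_iff.2 (hB.congr' ?_)
      filter_upwards [hev] with t ht
      rw [H.R₂ t ht, hf₂ t ht.1]
    · refine hC.congr' ?_
      filter_upwards [hev] with t ht
      rw [H.integ₁ f t ht, hi₁]
    · refine tendsto_nhdsGT_neg_one_iff.2 (hD.congr' ?_)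
      filter_upwards [hev] with t ht
      rw [H.integ₂ f t ht, hi₂]
    · refine forall_mem_Ioo_of_halves (fun t ht => ?_) fun t ht => ?_
      · rw [H.T₁ f ht, ← hT₁ t ht, halfT, halfT, hi₁, hf₁ t ht.1]
      · rw [H.T₂ f ht, ← hT₂ t ht, halfT, halfT, hi₂, hf₂ t ht.1]
  · refine forall_mem_Ioo_of_halves
      (H.half₁.eq_of_halfT_eq (hf₁.1.mono hsub₁) (hf₂.1.mono hsub₁) fun t ht => ?_)
      (H.half₂.eq_of_halfT_eq hf₁.1.comp_neg_Ico hf₂.1.comp_neg_Ico fun t ht => ?_)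
    · rw [← H.T₁ f₁ ht, ← H.T₁ f₂ ht, h₁ t (hsub₁ ht), h₂ t (hsub₁ ht)]
    · rw [← H.T₂ f₁ ht, ← H.T₂ f₂ ht, h₁ _ (hsub₂ t ht), h₂ _ (hsub₂ t ht)]
end

section
/- Let (R, ν) be a normalized BV₀ pair on (−1,1) of class BV₊ on I = (a₋, a₊). Define z : (−1,1) → I by z(t) = |a₋|·t for t ≤ 0 and z(t) = a₊·t for t ≥ 0, and let ν′ be the signed measure on (−1,1) given by ν′(B) = |a₋|·ν(z(B ∩ (−1,0))) + a₊·ν(z(B ∩ (0,1))) for Borel sets B ⊆ (−1,1). Then (R∘z, ν′) is a normalized BV₀ pair of class BV₊ on (−1,1); moreover, T_{R∘z, ν′}(f∘z)(t) = (T_{R,ν}f)(z(t)) for every continuous f : I → ℝ and every t ∈ (−1,1), and f ∈ D^I_{R,ν} if and only if f∘z ∈ D_{R∘z, ν′}. -/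
open MeasureTheory Set Filter Function Topology

/-- The pair `(R,ν)` is of class `BV₊` on the subinterval `I = (am, ap)`:
`|ν|((-1,1)) < ∞`, `R > 0` on `I`, and `ν` or `-ν` is nonnegative. -/
def NormBV0.BVplusOn (P : NormBV0) (am ap : ℝ) : Prop :=
  P.νp (Set.Ioo (-1 : ℝ) 1) ≠ ⊤ ∧ P.νm (Set.Ioo (-1 : ℝ) 1) ≠ ⊤ ∧
  (∀ t ∈ Set.Ioo am ap, 0 < P.R t) ∧ (P.νm = 0 ∨ P.νp = 0)

/-- The class `D^I_{R,ν}` of continuous functions on `I = (am, ap)` whose four boundary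
limits exist. -/
def NormBV0.memDI (P : NormBV0) (am ap : ℝ) (f : ℝ → ℝ) : Prop :=
  ContinuousOn f (Set.Ioo am ap) ∧
  (∃ L : ℝ, Tendsto (fun t => P.R t * f t) (𝓝[<] ap) (𝓝 L)) ∧
  (∃ L : ℝ, Tendsto (fun t => P.R t * f t) (𝓝[>] am) (𝓝 L)) ∧
  (∃ L : ℝ, Tendsto (fun t => P.integ (Set.Ioc 0 t) f) (𝓝[<] ap) (𝓝 L)) ∧
  (∃ L : ℝ, Tendsto (fun t => P.integ (Set.Ico t 0) f) (𝓝[>] am) (𝓝 L))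

/-- The dilation `z : (-1,1) → (am, ap)`. -/
noncomputable def zmap (am ap : ℝ) (t : ℝ) : ℝ := if t ≤ 0 then -am * t else ap * t

section Dilation

variable {am ap : ℝ}

theorem zmap_of_nonpos {t : ℝ} (ht : t ≤ 0) : zmap am ap t = -am * t := if_pos ht

theorem zmap_of_nonneg {t : ℝ} (ht : 0 ≤ t) : zmap am ap t = ap * t := by
  rcases ht.eq_or_lt with rfl | ht
  · simp [zmap]
  · exact if_neg ht.not_ge

theorem zmap_zero : zmap am ap 0 = 0 := by simp [zmap]

theorem zmap_one : zmap am ap 1 = ap := by simp [zmap_of_nonneg zero_le_one]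

theorem zmap_neg_one : zmap am ap (-1) = am := by
  rw [zmap_of_nonpos (by norm_num)]; ring

theorem zmap_strictMono (h2 : am < 0) (h3 : 0 < ap) : StrictMono (zmap am ap) := by
  intro x y hxy
  rcases le_total x 0 with hx | hx <;> rcases le_total y 0 with hy | hy
  · rw [zmap_of_nonpos hx, zmap_of_nonpos hy]; nlinarith
  · rw [zmap_of_nonpos hx, zmap_of_nonneg hy]
    rcases hx.eq_or_lt with rfl | hx
    · nlinarith
    · nlinarith [mul_nonneg h3.le hy]
  · linarith
  · rw [zmap_of_nonneg hx, zmap_of_nonneg hy]; nlinarith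

theorem zmap_surjective (h2 : am < 0) (h3 : 0 < ap) : Surjective (zmap am ap) := by
  intro y
  rcases le_total y 0 with hy | hy
  · have := h2.ne
    refine ⟨y / -am, ?_⟩
    rw [zmap_of_nonpos (div_nonpos_of_nonpos_of_nonneg hy (by linarith))]
    field_simp
  · refine ⟨y / ap, ?_⟩
    rw [zmap_of_nonneg (by positivity)]
    field_simp

/-- The dilation as an order isomorphism of the real line. -/
noncomputable def zmapIso (h2 : am < 0) (h3 : 0 < ap) : ℝ ≃o ℝ :=
  (zmap_strictMono h2 h3).orderIsoOfSurjective _ (zmap_surjective h2 h3)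

theorem continuous_zmap (h2 : am < 0) (h3 : 0 < ap) : Continuous (zmap am ap) :=
  (zmapIso h2 h3).continuous

theorem measurableEmbedding_zmap (h2 : am < 0) (h3 : 0 < ap) :
    MeasurableEmbedding (zmap am ap) :=
  (zmapIso h2 h3).toHomeomorph.measurableEmbedding

theorem zmap_image_Ioc (h2 : am < 0) (h3 : 0 < ap) (a b : ℝ) :
    zmap am ap '' Ioc a b = Ioc (zmap am ap a) (zmap am ap b) :=
  (zmapIso h2 h3).image_Ioc a b

theorem zmap_image_Ico (h2 : am < 0) (h3 : 0 < ap) (a b : ℝ) :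
    zmap am ap '' Ico a b = Ico (zmap am ap a) (zmap am ap b) :=
  (zmapIso h2 h3).image_Ico a b

theorem zmap_mem_Ioo (h2 : am < 0) (h3 : 0 < ap) {t : ℝ} (ht : t ∈ Ioo (-1 : ℝ) 1) :
    zmap am ap t ∈ Ioo am ap := by
  have hz := zmap_strictMono h2 h3
  exact ⟨zmap_neg_one.symm.trans_lt (hz ht.1), (hz ht.2).trans_eq zmap_one⟩

theorem map_zmap_nhdsLT (h2 : am < 0) (h3 : 0 < ap) (x : ℝ) :
    map (zmap am ap) (𝓝[<] x) = 𝓝[<] (zmap am ap x) := by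
  have h := (zmapIso h2 h3).toHomeomorph.isOpenEmbedding.map_nhdsWithin_preimage_eq
    (Iio (zmap am ap x)) x
  have hp : zmap am ap ⁻¹' Iio (zmap am ap x) = Iio x := by
    ext y; exact (zmap_strictMono h2 h3).lt_iff_lt
  change map (zmap am ap) (𝓝[zmap am ap ⁻¹' Iio (zmap am ap x)] x) = _ at h
  rwa [hp] at h

theorem map_zmap_nhdsGT (h2 : am < 0) (h3 : 0 < ap) (x : ℝ) :
    map (zmap am ap) (𝓝[>] x) = 𝓝[>] (zmap am ap x) := by
  have h := (zmapIso h2 h3).toHomeomorph.isOpenEmbedding.map_nhdsWithin_preimage_eq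
    (Ioi (zmap am ap x)) x
  have hp : zmap am ap ⁻¹' Ioi (zmap am ap x) = Ioi x := by
    ext y; exact (zmap_strictMono h2 h3).lt_iff_lt
  change map (zmap am ap) (𝓝[zmap am ap ⁻¹' Ioi (zmap am ap x)] x) = _ at h
  rwa [hp] at h

/-- The measure `B ↦ |am| * μ (z (B ∩ (-1,0))) + ap * μ (z (B ∩ (0,1)))`. -/
noncomputable def dilate (am ap : ℝ) (μ : Measure ℝ) : Measure ℝ :=
  ENNReal.ofReal |am| • (μ.comap (zmap am ap)).restrict (Ioo (-1) 0) +
    ENNReal.ofReal ap • (μ.comap (zmap am ap)).restrict (Ioo 0 1)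

theorem dilate_zero : dilate am ap 0 = 0 := by
  simp [dilate]

theorem dilate_apply (h2 : am < 0) (h3 : 0 < ap) (μ : Measure ℝ) {B : Set ℝ}
    (hB : MeasurableSet B) :
    dilate am ap μ B = ENNReal.ofReal |am| * μ (zmap am ap '' (B ∩ Ioo (-1 : ℝ) 0)) +
      ENNReal.ofReal ap * μ (zmap am ap '' (B ∩ Ioo (0 : ℝ) 1)) := by
  simp [dilate, Measure.restrict_apply hB, (measurableEmbedding_zmap h2 h3).comap_apply]

theorem dilate_compl (h2 : am < 0) (h3 : 0 < ap) (μ : Measure ℝ) :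
    dilate am ap μ (Ioo (-1 : ℝ) 1)ᶜ = 0 := by
  have hn : (Ioo (-1 : ℝ) 1)ᶜ ∩ Ioo (-1 : ℝ) 0 = ∅ := by
    ext x; simp only [mem_inter_iff, mem_compl_iff, mem_Ioo, mem_empty_iff_false, iff_false]; grind
  have hp : (Ioo (-1 : ℝ) 1)ᶜ ∩ Ioo (0 : ℝ) 1 = ∅ := by
    ext x; simp only [mem_inter_iff, mem_compl_iff, mem_Ioo, mem_empty_iff_false, iff_false]; grind
  simp [dilate_apply h2 h3 μ measurableSet_Ioo.compl, hn, hp]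

theorem dilate_singleton_zero (h2 : am < 0) (h3 : 0 < ap) (μ : Measure ℝ) :
    dilate am ap μ {0} = 0 := by
  simp [dilate_apply h2 h3 μ (measurableSet_singleton 0)]

theorem dilate_Ioo_ne_top (h1 : -1 ≤ am) (h2 : am < 0) (h3 : 0 < ap) (h4 : ap ≤ 1)
    {μ : Measure ℝ} (hμ : μ (Ioo (-1 : ℝ) 1) ≠ ⊤) :
    dilate am ap μ (Ioo (-1 : ℝ) 1) ≠ ⊤ := by
  have key (S : Set ℝ) : μ (zmap am ap '' (Ioo (-1 : ℝ) 1 ∩ S)) ≠ ⊤ := by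
    refine measure_ne_top_of_subset ?_ hμ
    rintro _ ⟨x, hx, rfl⟩
    exact Ioo_subset_Ioo h1 h4 (zmap_mem_Ioo h2 h3 hx.1)
  rw [dilate_apply h2 h3 μ measurableSet_Ioo]
  exact ENNReal.add_ne_top.2
    ⟨ENNReal.mul_ne_top ENNReal.ofReal_ne_top (key _),
      ENNReal.mul_ne_top ENNReal.ofReal_ne_top (key _)⟩

theorem setIntegral_comap_zmap (h2 : am < 0) (h3 : 0 < ap) (μ : Measure ℝ) {S : Set ℝ}
    (hS : MeasurableSet S) (f : ℝ → ℝ) :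
    ∫ s in S, f (zmap am ap s) ∂(μ.comap (zmap am ap)) = ∫ s in zmap am ap '' S, f s ∂μ := by
  have he := measurableEmbedding_zmap h2 h3
  have h := he.setIntegral_map (μ := μ.comap (zmap am ap)) f (zmap am ap '' S)
  rw [he.map_comap, Measure.restrict_restrict (he.measurableSet_image.2 hS),
    inter_eq_left.2 (image_subset_range _ _), he.injective.preimage_image] at h
  exact h.symm

theorem setIntegral_dilate_of_subset_pos (h2 : am < 0) (h3 : 0 < ap) (μ : Measure ℝ)
    {S : Set ℝ} (hS : MeasurableSet S) (hS1 : S ⊆ Ioo 0 1) (f : ℝ → ℝ) :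
    ∫ s in S, f (zmap am ap s) ∂(dilate am ap μ) = ap * ∫ s in zmap am ap '' S, f s ∂μ := by
  have hd : S ∩ Ioo (-1 : ℝ) 0 = ∅ := by
    ext x
    simp only [mem_inter_iff, mem_empty_iff_false, iff_false, not_and]
    exact fun hx hx' => (hS1 hx).1.not_gt hx'.2
  rw [← setIntegral_comap_zmap h2 h3 μ hS, dilate, Measure.restrict_add, Measure.restrict_smul,
    Measure.restrict_smul, Measure.restrict_restrict hS, Measure.restrict_restrict hS, hd,
    inter_eq_left.2 hS1]
  simp [integral_smul_measure, ENNReal.toReal_ofReal h3.le]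

theorem setIntegral_dilate_of_subset_neg (h2 : am < 0) (h3 : 0 < ap) (μ : Measure ℝ)
    {S : Set ℝ} (hS : MeasurableSet S) (hS1 : S ⊆ Ioo (-1) 0) (f : ℝ → ℝ) :
    ∫ s in S, f (zmap am ap s) ∂(dilate am ap μ) = -am * ∫ s in zmap am ap '' S, f s ∂μ := by
  have hd : S ∩ Ioo (0 : ℝ) 1 = ∅ := by
    ext x
    simp only [mem_inter_iff, mem_empty_iff_false, iff_false, not_and]
    exact fun hx hx' => (hS1 hx).2.not_gt hx'.1
  rw [← setIntegral_comap_zmap h2 h3 μ hS, dilate, Measure.restrict_add, Measure.restrict_smul,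
    Measure.restrict_smul, Measure.restrict_restrict hS, Measure.restrict_restrict hS, hd,
    inter_eq_left.2 hS1]
  simp [integral_smul_measure, abs_of_neg h2, ENNReal.toReal_ofReal (neg_pos.2 h2).le]

theorem setIntegral_Ioc_dilate (h2 : am < 0) (h3 : 0 < ap) (μ : Measure ℝ) {t : ℝ}
    (ht : t < 1) (f : ℝ → ℝ) :
    ∫ s in Ioc 0 t, f (zmap am ap s) ∂(dilate am ap μ) =
      ap * ∫ s in Ioc 0 (zmap am ap t), f s ∂μ := by
  rw [setIntegral_dilate_of_subset_pos h2 h3 μ measurableSet_Ioc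
    (fun s hs => ⟨hs.1, hs.2.trans_lt ht⟩), zmap_image_Ioc h2 h3, zmap_zero]

theorem setIntegral_Ico_dilate (h2 : am < 0) (h3 : 0 < ap) (μ : Measure ℝ) {t : ℝ}
    (ht : -1 < t) (f : ℝ → ℝ) :
    ∫ s in Ico t 0, f (zmap am ap s) ∂(dilate am ap μ) =
      -am * ∫ s in Ico (zmap am ap t) 0, f s ∂μ := by
  rw [setIntegral_dilate_of_subset_neg h2 h3 μ measurableSet_Ico
    (fun s hs => ⟨ht.trans_le hs.1, hs.2⟩), zmap_image_Ico h2 h3, zmap_zero]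

theorem setIntegral_id_Ioc_dilate (h2 : am < 0) (h3 : 0 < ap) (μ : Measure ℝ) {t : ℝ}
    (ht : t < 1) :
    ∫ s in Ioc 0 t, s ∂(dilate am ap μ) = ∫ s in Ioc 0 (zmap am ap t), s ∂μ := by
  have h := setIntegral_Ioc_dilate h2 h3 μ ht (fun s => s)
  rw [setIntegral_congr_fun measurableSet_Ioc
    (fun s (hs : s ∈ Ioc 0 t) => zmap_of_nonneg hs.1.le), integral_const_mul] at h
  exact mul_left_cancel₀ h3.ne' h

theorem setIntegral_id_Ico_dilate (h2 : am < 0) (h3 : 0 < ap) (μ : Measure ℝ) {t : ℝ}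
    (ht : -1 < t) :
    ∫ s in Ico t 0, s ∂(dilate am ap μ) = ∫ s in Ico (zmap am ap t) 0, s ∂μ := by
  have h := setIntegral_Ico_dilate h2 h3 μ ht (fun s => s)
  rw [setIntegral_congr_fun measurableSet_Ico
    (fun s (hs : s ∈ Ico t 0) => zmap_of_nonpos hs.2.le), integral_const_mul] at h
  exact mul_left_cancel₀ (neg_pos.2 h2).ne' h

/-- The pair obtained from `P` by precomposing `R` with `z` and dilating the measure. -/
noncomputable def NormBV0.dilation (P : NormBV0) (h1 : -1 ≤ am) (h2 : am < 0) (h3 : 0 < ap)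
    (h4 : ap ≤ 1) (hBV : P.BVplusOn am ap) : NormBV0 where
  R t := P.R (zmap am ap t)
  νp := dilate am ap P.νp
  νm := dilate am ap P.νm
  sing := by
    rcases hBV.2.2.2 with h | h <;> rw [h, dilate_zero]
    · exact Measure.MutuallySingular.zero_right
    · exact Measure.MutuallySingular.zero_left
  supp_p := dilate_compl h2 h3 _
  supp_m := dilate_compl h2 h3 _
  locfin_p K _ hK := measure_ne_top_of_subset hK (dilate_Ioo_ne_top h1 h2 h3 h4 hBV.1)
  locfin_m K _ hK := measure_ne_top_of_subset hK (dilate_Ioo_ne_top h1 h2 h3 h4 hBV.2.1)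
  zero_p := dilate_singleton_zero h2 h3 _
  zero_m := dilate_singleton_zero h2 h3 _
  fund_pos t ht := by
    have hz := zmap_mem_Ioo h2 h3 (t := t) ⟨by linarith [ht.1], ht.2⟩
    rw [zmap_zero, setIntegral_id_Ioc_dilate h2 h3 _ ht.2, setIntegral_id_Ioc_dilate h2 h3 _ ht.2]
    refine P.fund_pos _ ⟨?_, hz.2.trans_le h4⟩
    rw [zmap_of_nonneg ht.1]
    exact mul_nonneg h3.le ht.1
  fund_neg t ht := by
    have hz := zmap_mem_Ioo h2 h3 (t := t) ⟨ht.1, by linarith [ht.2]⟩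
    rw [zmap_zero, setIntegral_id_Ico_dilate h2 h3 _ ht.1, setIntegral_id_Ico_dilate h2 h3 _ ht.1]
    refine P.fund_neg _ ⟨h1.trans_lt hz.1, ?_⟩
    rw [zmap_of_nonpos ht.2]
    exact mul_nonpos_of_nonneg_of_nonpos (by linarith) ht.2

theorem exists_tendsto_const_mul_iff {l : Filter ℝ} {g : ℝ → ℝ} {c : ℝ} (hc : c ≠ 0) :
    (∃ L, Tendsto (fun t => c * g t) l (𝓝 L)) ↔ ∃ L, Tendsto g l (𝓝 L) := by
  constructor
  · rintro ⟨L, hL⟩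
    refine ⟨c⁻¹ * L, (hL.const_mul c⁻¹).congr fun t => ?_⟩
    rw [inv_mul_cancel_left₀ hc]
  · rintro ⟨L, hL⟩
    exact ⟨c * L, hL.const_mul c⟩

end Dilation

/-- Transferring a `BV₊` pair on `I = (a₋, a₊)` to a `BV₊` pair on
`(-1,1)` via the dilation `z`: the pair `(R∘z, ν′)` with
`ν′(B) = |a₋|·ν(z(B ∩ (-1,0))) + a₊·ν(z(B ∩ (0,1)))` is a normalized BV₀ pair of class
`BV₊` on `(-1,1)`, satisfies `T_{R∘z,ν′}(f∘z) = (T_{R,ν}f)∘z`, and `f ∈ D^I_{R,ν}` iff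
`f∘z ∈ D_{R∘z,ν′}`. -/
theorem bv0_dilation (P : NormBV0) (am ap : ℝ)
    (h1 : -1 ≤ am) (h2 : am < 0) (h3 : 0 < ap) (h4 : ap ≤ 1)
    (hBV : P.BVplusOn am ap) :
    ∃ Q : NormBV0,
      (∀ t : ℝ, Q.R t = P.R (zmap am ap t)) ∧
      (∀ B : Set ℝ, MeasurableSet B →
        Q.νp B = ENNReal.ofReal |am| * P.νp (zmap am ap '' (B ∩ Set.Ioo (-1 : ℝ) 0)) +
            ENNReal.ofReal ap * P.νp (zmap am ap '' (B ∩ Set.Ioo (0 : ℝ) 1)) ∧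
        Q.νm B = ENNReal.ofReal |am| * P.νm (zmap am ap '' (B ∩ Set.Ioo (-1 : ℝ) 0)) +
            ENNReal.ofReal ap * P.νm (zmap am ap '' (B ∩ Set.Ioo (0 : ℝ) 1))) ∧
      Q.BVplus ∧
      (∀ f : ℝ → ℝ, ContinuousOn f (Set.Ioo am ap) →
        (∀ t ∈ Set.Ioo (-1 : ℝ) 1, Q.T (fun s => f (zmap am ap s)) t = P.T f (zmap am ap t)) ∧
        (P.memDI am ap f ↔ Q.memD (fun s => f (zmap am ap s)))) := by
  have integ_pos (f : ℝ → ℝ) {t : ℝ} (ht : t < 1) :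
      (P.dilation h1 h2 h3 h4 hBV).integ (Ioc 0 t) (fun s => f (zmap am ap s)) =
        ap * P.integ (Ioc 0 (zmap am ap t)) f := by
    simp only [NormBV0.integ, NormBV0.dilation, setIntegral_Ioc_dilate h2 h3 _ ht, mul_sub]
  have integ_neg (f : ℝ → ℝ) {t : ℝ} (ht : -1 < t) :
      (P.dilation h1 h2 h3 h4 hBV).integ (Ico t 0) (fun s => f (zmap am ap s)) =
        -am * P.integ (Ico (zmap am ap t) 0) f := by
    simp only [NormBV0.integ, NormBV0.dilation, setIntegral_Ico_dilate h2 h3 _ ht, mul_sub]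
  refine ⟨P.dilation h1 h2 h3 h4 hBV, fun t => rfl, fun B hB =>
    ⟨dilate_apply h2 h3 _ hB, dilate_apply h2 h3 _ hB⟩,
    ⟨dilate_Ioo_ne_top h1 h2 h3 h4 hBV.1, dilate_Ioo_ne_top h1 h2 h3 h4 hBV.2.1,
      fun t ht => hBV.2.2.1 _ (zmap_mem_Ioo h2 h3 ht), ?_⟩, fun f hf => ⟨fun t ht => ?_, ?_⟩⟩
  · refine hBV.2.2.2.imp (fun h => ?_) (fun h => ?_) <;>
      simp only [NormBV0.dilation, h, dilate_zero]
  · rcases lt_or_ge 0 t with h0 | h0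
    · have hz : 0 < zmap am ap t := by rw [zmap_of_nonneg h0.le]; positivity
      rw [NormBV0.T, NormBV0.T, if_pos h0, if_pos hz, integ_pos f ht.2, ← mul_assoc, mul_comm t ap,
        ← zmap_of_nonneg (am := am) h0.le]
      rfl
    · have hz : ¬ 0 < zmap am ap t := by
        rw [zmap_of_nonpos h0, not_lt]
        exact mul_nonpos_of_nonneg_of_nonpos (by linarith) h0
      rw [NormBV0.T, NormBV0.T, if_neg h0.not_gt, if_neg hz, integ_neg f ht.1, ← mul_assoc,
        mul_comm t (-am), ← zmap_of_nonpos (ap := ap) h0]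
      rfl
  · have hfz : ContinuousOn (fun s => f (zmap am ap s)) (Ioo (-1) 1) :=
      hf.comp (continuous_zmap h2 h3).continuousOn fun t ht => zmap_mem_Ioo h2 h3 ht
    have hlt : 𝓝[<] ap = map (zmap am ap) (𝓝[<] 1) := by
      rw [map_zmap_nhdsLT h2 h3, zmap_one]
    have hgt : 𝓝[>] am = map (zmap am ap) (𝓝[>] (-1)) := by
      rw [map_zmap_nhdsGT h2 h3, zmap_neg_one]
    refine and_congr (iff_of_true hf hfz) (and_congr ?_ (and_congr ?_ (and_congr ?_ ?_)))
    · rw [hlt]; rfl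
    · rw [hgt]; rfl
    · rw [hlt, ← exists_tendsto_const_mul_iff h3.ne']
      refine exists_congr fun L => tendsto_map'_iff.trans (tendsto_congr' ?_)
      filter_upwards [self_mem_nhdsWithin] with t ht
      exact (integ_pos f ht).symm
    · rw [hgt, ← exists_tendsto_const_mul_iff (neg_pos.2 h2).ne']
      refine exists_congr fun L => tendsto_map'_iff.trans (tendsto_congr' ?_)
      filter_upwards [self_mem_nhdsWithin] with t ht
      exact (integ_neg f ht).symm
end
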